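/- arXiv:2211.07952 — 2 statements merged into one kernel-verified Lean document; each statement's English description precedes it below -/
import Mathlib

section
/- If the partition Y_1|Y_2|⋯|Y_l of (a subsystem of) an n-partite quantum system A_1A_2⋯A_n is coarser than the partition X_1|X_2|⋯|X_k (i.e., X_1|⋯|X_k ≻ Y_1|⋯|Y_l), then for every density operator ρ on H^{A_1}⊗⋯⊗H^{A_n} one has I(X_1:X_2:⋯:X_k) ≥ I(Y_1:Y_2:⋯:Y_l). -/
open scoped BigOperators ComplexOrder
open Matrix

noncomputable section

/-- The function `x ↦ -x·log₂ x` (with the convention `0·log₂ 0 = 0`). -/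
def negxlog2 (x : ℝ) : ℝ := -(x * Real.logb 2 x)

/-- The von Neumann entropy (base 2), `S(ρ) = -Tr(ρ log₂ ρ)`, computed as the sum of
`-λ log₂ λ` over the eigenvalues of a Hermitian matrix (junk value `0` otherwise). -/
def vnEntropy {n : Type} [Fintype n] [DecidableEq n] (ρ : Matrix n n ℂ) : ℝ :=
  if h : ρ.IsHermitian then ∑ i, negxlog2 (h.eigenvalues i) else 0

/-- The Tsallis q-entropy `S_q(ρ) = (1 - Tr ρ^q)/(q-1)`, computed via eigenvalues. -/
def tsallisEntropy (q : ℝ) {n : Type} [Fintype n] [DecidableEq n] (ρ : Matrix n n ℂ) : ℝ :=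
  if h : ρ.IsHermitian then (1 - ∑ i, (h.eigenvalues i) ^ q) / (q - 1) else 0

/-- A density operator: positive semidefinite with unit trace. -/
def IsDensity {n : Type} [Fintype n] [DecidableEq n] (ρ : Matrix n n ℂ) : Prop :=
  ρ.PosSemidef ∧ ρ.trace = 1

/-- rank-one projection `|ψ⟩⟨ψ|`. -/
def outer {α : Type} (ψ : α → ℂ) : Matrix α α ℂ :=
  fun a b => ψ a * (starRingEnd ℂ) (ψ b)

section multi

variable {ι : Type} [Fintype ι] [DecidableEq ι] {d : ι → Type}
  [∀ i, Fintype (d i)] [∀ i, DecidableEq (d i)]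

/-- Combine an assignment of basis indices on the parties in `s` with one on the
complementary parties. -/
def combine (s : Finset ι) (x : (i : {j // j ∈ s}) → d i.1) (z : (i : {j // j ∉ s}) → d i.1)
    (i : ι) : d i :=
  if h : i ∈ s then x ⟨i, h⟩ else z ⟨i, h⟩

/-- The reduced state on the parties in `s`: partial trace over the complementary parties. -/
def pTr (ρ : Matrix (∀ i, d i) (∀ i, d i) ℂ) (s : Finset ι) :
    Matrix ((i : {j // j ∈ s}) → d i.1) ((i : {j // j ∈ s}) → d i.1) ℂ :=
  fun x y => ∑ z : (i : {j // j ∉ s}) → d i.1, ρ (combine s x z) (combine s y z)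

/-- von Neumann entropy of the reduced state on `s`. -/
def Sv (ρ : Matrix (∀ i, d i) (∀ i, d i) ℂ) (s : Finset ι) : ℝ := vnEntropy (pTr ρ s)

/-- Tsallis q-entropy of the reduced state on `s`. -/
def Sq (q : ℝ) (ρ : Matrix (∀ i, d i) (∀ i, d i) ℂ) (s : Finset ι) : ℝ :=
  tsallisEntropy q (pTr ρ s)

/-- Multipartite quantum mutual information `I(X₁:⋯:X_k) = Σ_s S(X_s) - S(X₁⋯X_k)` of a
partition `P` (each block a finset of parties, treated as a single party). -/
def MI (ρ : Matrix (∀ i, d i) (∀ i, d i) ℂ) (P : Finset (Finset ι)) : ℝ :=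
  (∑ X ∈ P, Sv ρ X) - Sv ρ (P.sup id)

/-- Dual multipartite quantum mutual information
`I'(X₁:⋯:X_k) = Σ_s S(X̄_s) - (k-1) S(X₁⋯X_k)`, where `X̄_s` is the union of all blocks
other than `X_s`. -/
def MI' (ρ : Matrix (∀ i, d i) (∀ i, d i) ℂ) (P : Finset (Finset ι)) : ℝ :=
  (∑ X ∈ P, Sv ρ (P.sup id \ X)) - ((P.card : ℝ) - 1) * Sv ρ (P.sup id)

/-- Tsallis multipartite quantum mutual information. -/
def MIq (q : ℝ) (ρ : Matrix (∀ i, d i) (∀ i, d i) ℂ) (P : Finset (Finset ι)) : ℝ :=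
  (∑ X ∈ P, Sq q ρ X) - Sq q ρ (P.sup id)

/-- Tsallis dual multipartite quantum mutual information. -/
def MIq' (q : ℝ) (ρ : Matrix (∀ i, d i) (∀ i, d i) ℂ) (P : Finset (Finset ι)) : ℝ :=
  (∑ X ∈ P, Sq q ρ (P.sup id \ X)) - ((P.card : ℝ) - 1) * Sq q ρ (P.sup id)

/-- The finest partition of the set `s` of parties: each party its own block. -/
def finest (s : Finset ι) : Finset (Finset ι) := s.image fun i => {i}

end multi

/-- A partition (of a subsystem): nonempty pairwise disjoint blocks. -/
def IsPartition {ι : Type} [DecidableEq ι] (P : Finset (Finset ι)) : Prop :=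
  (∀ X ∈ P, X.Nonempty) ∧ (P : Set (Finset ι)).PairwiseDisjoint id

/-- One coarsening step: (a) discarding whole blocks, (b) merging blocks into one block,
(c) discarding some parties from within a block containing at least two parties. -/
inductive CoarserStep {ι : Type} [DecidableEq ι] : Finset (Finset ι) → Finset (Finset ι) → Prop
  | discard {P Q : Finset (Finset ι)} (hQP : Q ⊆ P) (hQ : Q.Nonempty) : CoarserStep P Q
  | merge (P T : Finset (Finset ι)) (hT : T ⊆ P) (hT' : T.Nonempty) :
      CoarserStep P (insert (T.sup id) (P \ T))
  | shrink (P : Finset (Finset ι)) (X X' : Finset ι) (hX : X ∈ P) (h2 : 2 ≤ X.card)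
      (hsub : X' ⊆ X) (hne : X'.Nonempty) : CoarserStep P (insert X' (P.erase X))

/-- `Coarser P Q` : the partition `Q` is coarser than `P` (`P ≻ Q`). -/
def Coarser {ι : Type} [DecidableEq ι] (P Q : Finset (Finset ι)) : Prop :=
  Relation.ReflTransGen CoarserStep P Q

end

open scoped Kronecker

def ssaPtr {n C : Type} [Fintype C] (τ : Matrix (n × C) (n × C) ℂ) : Matrix n n ℂ :=
  fun a b => ∑ c, τ (a, c) (b, c)

lemma ssa_trace_kron {n C : Type} [Fintype n] [DecidableEq n] [Fintype C] [DecidableEq C]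
    (Z : Matrix n n ℂ) (τ : Matrix (n × C) (n × C) ℂ) :
    ((Z ⊗ₖ (1 : Matrix C C ℂ)) * τ).trace = (Z * ssaPtr τ).trace := by
  simp only [Matrix.trace, Matrix.diag, Matrix.mul_apply, Fintype.sum_prod_type,
    Matrix.kroneckerMap_apply, Matrix.one_apply, ssaPtr, Finset.mul_sum]
  refine Finset.sum_congr rfl fun a _ => ?_
  rw [Finset.sum_comm]
  refine Finset.sum_congr rfl fun b _ => ?_
  simp

/-- variational functional -/
noncomputable def ssaPhi {n : Type} [Fintype n] [DecidableEq n] (t : ℝ) (ρ σ X : Matrix n n ℂ) : ℝ :=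
  2 * (Xᴴ * ρ).trace.re - (X * Xᴴ * σ).trace.re - t * (Xᴴ * X * ρ).trace.re

lemma ssaPhi_kron {n C : Type} [Fintype n] [DecidableEq n] [Fintype C] [DecidableEq C] (t : ℝ)
    (ρ σ : Matrix (n × C) (n × C) ℂ) (X : Matrix n n ℂ) :
    ssaPhi t ρ σ (X ⊗ₖ (1 : Matrix C C ℂ)) = ssaPhi t (ssaPtr ρ) (ssaPtr σ) X := by
  unfold ssaPhi
  rw [Matrix.conjTranspose_kronecker, Matrix.conjTranspose_one, ← Matrix.mul_kronecker_mul,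
    ← Matrix.mul_kronecker_mul, Matrix.one_mul, ssa_trace_kron, ssa_trace_kron, ssa_trace_kron]

/-- spectral decomposition predicate -/
structure SsaDec {n : Type} [Fintype n] [DecidableEq n] (ρ U : Matrix n n ℂ) (p : n → ℝ) : Prop where
  nonneg : ∀ i, 0 ≤ p i
  left : Uᴴ * U = 1
  right : U * Uᴴ = 1
  eq : ρ = U * Matrix.diagonal (fun i => (p i : ℂ)) * Uᴴ

/-- weights -/
noncomputable def ssaW {n : Type} [Fintype n] (W U : Matrix n n ℂ) (j i : n) : ℝ :=
  Complex.normSq ((Wᴴ * U) j i)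

lemma ssaW_nonneg {n : Type} [Fintype n] (W U : Matrix n n ℂ) (j i : n) : 0 ≤ ssaW W U j i :=
  Complex.normSq_nonneg _

noncomputable def ssaF {n : Type} [Fintype n] (t : ℝ) (W U : Matrix n n ℂ) (p q : n → ℝ) : ℝ :=
  ∑ j, ∑ i, ssaW W U j i * (p i ^ 2 / (q j + t * p i))

lemma ssaPhi_dec {n : Type} [Fintype n] [DecidableEq n] (t : ℝ) {ρ σ U W : Matrix n n ℂ} {p q : n → ℝ}
    (hρ : SsaDec ρ U p) (hσ : SsaDec σ W q) (Y : Matrix n n ℂ) :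
    ssaPhi t ρ σ (W * Y * Uᴴ) = ∑ j, ∑ i,
      (2 * (star (Y j i) * (Wᴴ * U) j i).re * p i - (q j + t * p i) * Complex.normSq (Y j i)) := by
  have e1 : ((W * Y * Uᴴ)ᴴ * ρ).trace
      = (Yᴴ * ((Wᴴ * U) * Matrix.diagonal (fun i => (p i : ℂ)))).trace := by
    rw [hρ.eq]
    simp only [Matrix.conjTranspose_mul, Matrix.conjTranspose_conjTranspose]
    rw [Matrix.mul_assoc U, Matrix.trace_mul_comm]
    simp only [Matrix.mul_assoc]
    rw [hρ.left, Matrix.mul_one]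
  have e2 : ((W * Y * Uᴴ) * (W * Y * Uᴴ)ᴴ * σ).trace
      = (Y * Yᴴ * Matrix.diagonal (fun i => (q i : ℂ))).trace := by
    have : (W * Y * Uᴴ) * (W * Y * Uᴴ)ᴴ = W * (Y * Yᴴ) * Wᴴ := by
      simp only [Matrix.conjTranspose_mul, Matrix.conjTranspose_conjTranspose]
      calc W * Y * Uᴴ * (U * (Yᴴ * Wᴴ)) = W * Y * (Uᴴ * U) * (Yᴴ * Wᴴ) := by
            simp only [Matrix.mul_assoc]
        _ = _ := by rw [hρ.left]; simp only [Matrix.mul_assoc, Matrix.one_mul]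
    rw [this, hσ.eq]
    calc (W * (Y * Yᴴ) * Wᴴ * (W * Matrix.diagonal (fun i => (q i : ℂ)) * Wᴴ)).trace
        = (W * (Y * Yᴴ) * (Wᴴ * W) * Matrix.diagonal (fun i => (q i : ℂ)) * Wᴴ).trace := by
          simp only [Matrix.mul_assoc]
      _ = _ := by
          rw [Matrix.trace_mul_comm, hσ.left]
          simp only [← Matrix.mul_assoc]
          rw [hσ.left]
          simp only [Matrix.mul_one, Matrix.one_mul]
  have e3 : ((W * Y * Uᴴ)ᴴ * (W * Y * Uᴴ) * ρ).trace
      = (Yᴴ * Y * Matrix.diagonal (fun i => (p i : ℂ))).trace := by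
    have : (W * Y * Uᴴ)ᴴ * (W * Y * Uᴴ) = U * (Yᴴ * Y) * Uᴴ := by
      simp only [Matrix.conjTranspose_mul, Matrix.conjTranspose_conjTranspose]
      calc U * (Yᴴ * Wᴴ) * (W * Y * Uᴴ) = U * Yᴴ * (Wᴴ * W) * (Y * Uᴴ) := by
            simp only [Matrix.mul_assoc]
        _ = _ := by rw [hσ.left]; simp only [Matrix.mul_assoc, Matrix.one_mul]
    rw [this, hρ.eq]
    calc (U * (Yᴴ * Y) * Uᴴ * (U * Matrix.diagonal (fun i => (p i : ℂ)) * Uᴴ)).trace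
        = (U * (Yᴴ * Y) * (Uᴴ * U) * Matrix.diagonal (fun i => (p i : ℂ)) * Uᴴ).trace := by
          simp only [Matrix.mul_assoc]
      _ = _ := by
          rw [Matrix.trace_mul_comm, hρ.left]
          simp only [← Matrix.mul_assoc]
          rw [hρ.left]
          simp only [Matrix.mul_one, Matrix.one_mul]
  unfold ssaPhi
  rw [e1, e2, e3]
  have f1 : (Yᴴ * ((Wᴴ * U) * Matrix.diagonal (fun i => (p i : ℂ)))).trace.re
      = ∑ j, ∑ i, (star (Y j i) * (Wᴴ * U) j i).re * p i := by
    simp only [Matrix.trace, Matrix.diag]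
    rw [Finset.sum_comm, Complex.re_sum]
    refine Finset.sum_congr rfl fun i _ => ?_
    rw [Matrix.mul_apply, Complex.re_sum]
    refine Finset.sum_congr rfl fun j _ => ?_
    rw [Matrix.mul_diagonal, ← mul_assoc, Complex.re_mul_ofReal]
    rfl
  have f2 : (Y * Yᴴ * Matrix.diagonal (fun i => (q i : ℂ))).trace.re
      = ∑ j, ∑ i, q j * Complex.normSq (Y j i) := by
    simp only [Matrix.trace, Matrix.diag]
    rw [Complex.re_sum]
    refine Finset.sum_congr rfl fun j _ => ?_
    rw [Matrix.mul_diagonal, Complex.re_mul_ofReal, Matrix.mul_apply, Complex.re_sum, Finset.sum_mul]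
    refine Finset.sum_congr rfl fun i _ => ?_
    rw [Matrix.conjTranspose_apply]
    change (Y j i * (starRingEnd ℂ) (Y j i)).re * _ = _
    rw [Complex.mul_conj, Complex.ofReal_re, mul_comm]
  have f3 : (Yᴴ * Y * Matrix.diagonal (fun i => (p i : ℂ))).trace.re
      = ∑ j, ∑ i, p i * Complex.normSq (Y j i) := by
    simp only [Matrix.trace, Matrix.diag]
    rw [Finset.sum_comm, Complex.re_sum]
    refine Finset.sum_congr rfl fun j _ => ?_
    rw [Matrix.mul_diagonal, Complex.re_mul_ofReal, Matrix.mul_apply, Complex.re_sum, Finset.sum_mul]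
    refine Finset.sum_congr rfl fun i _ => ?_
    rw [Matrix.conjTranspose_apply, mul_comm (star _)]
    change (Y i j * (starRingEnd ℂ) (Y i j)).re * _ = _
    rw [Complex.mul_conj, Complex.ofReal_re, mul_comm]
  rw [f1, f2, f3]
  simp only [Finset.mul_sum, ← Finset.sum_sub_distrib]
  refine Finset.sum_congr rfl fun j _ => Finset.sum_congr rfl fun i _ => ?_
  ring

lemma ssa_scalar_le (y m : ℂ) (p a : ℝ) (ha : 0 ≤ a) (h0 : a = 0 → p = 0) :
    2 * (star y * m).re * p - a * Complex.normSq y ≤ Complex.normSq m * (p ^ 2 / a) := by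
  rcases ha.eq_or_lt with h | h
  · have := h0 h.symm
    subst this
    simp [← h]
  · rw [← mul_div_assoc, le_div_iff₀ h]
    simp only [Complex.normSq_apply, Complex.mul_re, Complex.star_def, Complex.conj_re, Complex.conj_im]
    nlinarith [sq_nonneg (a * y.re - p * m.re), sq_nonneg (a * y.im - p * m.im)]

lemma ssa_scalar_eq (m : ℂ) (p a : ℝ) (h0 : a = 0 → p = 0) :
    2 * (star (((p / a : ℝ) : ℂ) * m) * m).re * p - a * Complex.normSq (((p / a : ℝ) : ℂ) * m)
      = Complex.normSq m * (p ^ 2 / a) := by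
  by_cases h : a = 0
  · simp [h0 h, h]
  · simp only [Complex.normSq_apply, Complex.mul_re, Complex.mul_im, Complex.star_def, Complex.conj_re, Complex.conj_im,
      Complex.ofReal_re, Complex.ofReal_im]
    field_simp
    ring

lemma ssa_den {t p q : ℝ} (ht : 0 < t) (hp : 0 ≤ p) (hq : 0 ≤ q) (h : q + t * p = 0) : p = 0 := by
  have := mul_nonneg ht.le hp
  have h2 : t * p = 0 := by linarith
  rcases mul_eq_zero.1 h2 with h3 | h3
  · exact absurd h3 ht.ne'
  · exact h3

lemma ssaPhi_le {n : Type} [Fintype n] [DecidableEq n] {t : ℝ} (ht : 0 < t) {ρ σ U W : Matrix n n ℂ} {p q : n → ℝ}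
    (hρ : SsaDec ρ U p) (hσ : SsaDec σ W q) (X : Matrix n n ℂ) :
    ssaPhi t ρ σ X ≤ ssaF t W U p q := by
  have hX : X = W * (Wᴴ * X * U) * Uᴴ := by
    calc X = (W * Wᴴ) * X * (U * Uᴴ) := by rw [hσ.right, hρ.right]; simp
      _ = _ := by simp only [Matrix.mul_assoc]
  rw [hX, ssaPhi_dec t hρ hσ]
  refine Finset.sum_le_sum fun j _ => Finset.sum_le_sum fun i _ => ?_
  exact ssa_scalar_le _ _ _ _ (add_nonneg (hσ.nonneg j) (mul_nonneg ht.le (hρ.nonneg i)))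
    (ssa_den ht (hρ.nonneg i) (hσ.nonneg j))

lemma ssaPhi_attain {n : Type} [Fintype n] [DecidableEq n] {t : ℝ} (ht : 0 < t) {ρ σ U W : Matrix n n ℂ} {p q : n → ℝ}
    (hρ : SsaDec ρ U p) (hσ : SsaDec σ W q) :
    ∃ X, ssaPhi t ρ σ X = ssaF t W U p q := by
  refine ⟨W * (Matrix.of fun j i => ((p i / (q j + t * p i) : ℝ) : ℂ) * (Wᴴ * U) j i) * Uᴴ, ?_⟩
  rw [ssaPhi_dec t hρ hσ]
  refine Finset.sum_congr rfl fun j _ => Finset.sum_congr rfl fun i _ => ?_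
  exact ssa_scalar_eq _ _ _ (ssa_den ht (hρ.nonneg i) (hσ.nonneg j))

lemma ssaF_mono {n C : Type} [Fintype n] [DecidableEq n] [Fintype C] [DecidableEq C] {t : ℝ} (ht : 0 < t)
    {ρ σ U W : Matrix (n × C) (n × C) ℂ} {p q : n × C → ℝ} {U' W' : Matrix n n ℂ} {p' q' : n → ℝ}
    (hρ : SsaDec ρ U p) (hσ : SsaDec σ W q)
    (hρ' : SsaDec (ssaPtr ρ) U' p') (hσ' : SsaDec (ssaPtr σ) W' q') :
    ssaF t W' U' p' q' ≤ ssaF t W U p q := by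
  obtain ⟨X, hX⟩ := ssaPhi_attain ht hρ' hσ'
  rw [← hX, ← ssaPhi_kron]
  exact ssaPhi_le ht hρ hσ _

/-- finite-T integral -/
noncomputable def ssaG {n : Type} [Fintype n] (W U : Matrix n n ℂ) (p q : n → ℝ) (t : ℝ) : ℝ :=
  ∑ j, ∑ i, ssaW W U j i * p i * (Real.log (q j + t * p i) - Real.log (q j))

def SsaSupp {n : Type} [Fintype n] (W U : Matrix n n ℂ) (p q : n → ℝ) : Prop :=
  ∀ j i, q j = 0 → ssaW W U j i * p i = 0

lemma ssaG_deriv {n : Type} [Fintype n] {W U : Matrix n n ℂ} {p q : n → ℝ} (hp : ∀ i, 0 ≤ p i)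
    (hq : ∀ i, 0 ≤ q i) (hs : SsaSupp W U p q) {t : ℝ} (ht : 0 ≤ t) :
    HasDerivAt (ssaG W U p q) (ssaF t W U p q) t := by
  unfold ssaG ssaF
  refine HasDerivAt.fun_sum fun j _ => HasDerivAt.fun_sum fun i _ => ?_
  rcases (hq j).eq_or_lt with h | h
  · have h1 := hs j i h.symm
    have h2 : ssaW W U j i * (p i ^ 2 / (q j + t * p i)) = 0 := by
      rw [pow_two, ← mul_div_assoc, ← mul_assoc, h1]; simp
    rw [h2]
    simp only [h1, zero_mul]
    exact hasDerivAt_const _ _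
  · have hpos : 0 < q j + t * p i := by have := mul_nonneg ht (hp i); linarith
    have hd : HasDerivAt (fun t : ℝ => q j + t * p i) (p i) t := by
      simpa using ((hasDerivAt_id t).mul_const (p i)).const_add (q j)
    have := ((hd.log hpos.ne').sub_const (Real.log (q j))).const_mul (ssaW W U j i * p i)
    exact this.congr_deriv (by ring)

lemma ssaG_mono {n C : Type} [Fintype n] [DecidableEq n] [Fintype C] [DecidableEq C]
    {ρ σ U W : Matrix (n × C) (n × C) ℂ} {p q : n × C → ℝ} {U' W' : Matrix n n ℂ} {p' q' : n → ℝ}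
    (hρ : SsaDec ρ U p) (hσ : SsaDec σ W q)
    (hρ' : SsaDec (ssaPtr ρ) U' p') (hσ' : SsaDec (ssaPtr σ) W' q')
    (hs : SsaSupp W U p q) (hs' : SsaSupp W' U' p' q') {t : ℝ} (ht : 0 ≤ t) :
    ssaG W' U' p' q' t ≤ ssaG W U p q t := by
  have hd : ∀ t : ℝ, 0 ≤ t → HasDerivAt (fun t => ssaG W U p q t - ssaG W' U' p' q' t)
      (ssaF t W U p q - ssaF t W' U' p' q') t := fun t ht =>
    (ssaG_deriv hρ.nonneg hσ.nonneg hs ht).sub (ssaG_deriv hρ'.nonneg hσ'.nonneg hs' ht)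
  have hm : MonotoneOn (fun t => ssaG W U p q t - ssaG W' U' p' q' t) (Set.Ici 0) := by
    refine monotoneOn_of_deriv_nonneg (convex_Ici 0)
      (fun x hx => (hd x hx).continuousAt.continuousWithinAt) ?_ ?_
    · intro x hx
      rw [interior_Ici] at hx
      exact (hd x (le_of_lt hx)).differentiableAt.differentiableWithinAt
    · intro x hx
      rw [interior_Ici] at hx
      rw [(hd x (le_of_lt hx)).deriv]
      exact sub_nonneg.2 (ssaF_mono hx hρ hσ hρ' hσ')
  have := hm (Set.mem_Ici.2 le_rfl) (Set.mem_Ici.2 ht) ht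
  simp only [ssaG, zero_mul, add_zero, sub_self, mul_zero, Finset.sum_const_zero] at this
  simp only [ssaG]
  linarith

/-- relative entropy (natural log) -/
noncomputable def ssaD {n : Type} [Fintype n] (W U : Matrix n n ℂ) (p q : n → ℝ) : ℝ :=
  ∑ j, ∑ i, ssaW W U j i * p i * (Real.log (p i) - Real.log (q j))

lemma ssaG_lim {n : Type} [Fintype n] {W U : Matrix n n ℂ} {p q : n → ℝ} (hp : ∀ i, 0 ≤ p i)
    (hq : ∀ i, 0 ≤ q i) :
    Filter.Tendsto (fun t => ssaG W U p q t - (∑ j, ∑ i, ssaW W U j i * p i) * Real.log t)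
      Filter.atTop (nhds (ssaD W U p q)) := by
  have h : ∀ t, ssaG W U p q t - (∑ j, ∑ i, ssaW W U j i * p i) * Real.log t
      = ∑ j, ∑ i, ssaW W U j i * p i * (Real.log (q j + t * p i) - Real.log (q j) - Real.log t) := by
    intro t
    simp only [ssaG, Finset.sum_mul, ← Finset.sum_sub_distrib]
    refine Finset.sum_congr rfl fun j _ => Finset.sum_congr rfl fun i _ => ?_
    ring
  simp only [h]
  unfold ssaD
  refine tendsto_finsetSum _ fun j _ => tendsto_finsetSum _ fun i _ => ?_
  rcases (hp i).eq_or_lt with h0 | h0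
  · simp [← h0]
  · refine Filter.Tendsto.const_mul _ ?_
    have h1 : Filter.Tendsto (fun t : ℝ => Real.log (q j / t + p i) - Real.log (q j)) Filter.atTop
        (nhds (Real.log (p i) - Real.log (q j))) := by
      refine Filter.Tendsto.sub_const ?_ _
      have h2 : Filter.Tendsto (fun t : ℝ => q j / t + p i) Filter.atTop (nhds (0 + p i)) :=
        (Filter.Tendsto.div_atTop tendsto_const_nhds Filter.tendsto_id).add_const _
      rw [zero_add] at h2
      exact h2.log h0.ne'
    refine h1.congr' ?_
    filter_upwards [Filter.eventually_gt_atTop 0] with t ht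
    have : q j / t + p i = (q j + t * p i) / t := by field_simp
    rw [this, Real.log_div _ ht.ne']
    · ring
    · have := mul_pos ht h0
      have := hq j
      linarith

lemma ssaW_sum {n : Type} [Fintype n] [DecidableEq n] {W U : Matrix n n ℂ}
    (hU : Uᴴ * U = 1) (hW : W * Wᴴ = 1) (i : n) : ∑ j, ssaW W U j i = 1 := by
  have h : (Wᴴ * U)ᴴ * (Wᴴ * U) = 1 := by
    simp only [Matrix.conjTranspose_mul, Matrix.conjTranspose_conjTranspose]
    calc Uᴴ * W * (Wᴴ * U) = Uᴴ * (W * Wᴴ) * U := by simp only [Matrix.mul_assoc]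
      _ = 1 := by rw [hW, Matrix.mul_one, hU]
  have h2 := congrFun (congrFun h i) i
  rw [Matrix.mul_apply, Matrix.one_apply_eq] at h2
  have h3 := congrArg Complex.re h2
  rw [Complex.re_sum] at h3
  rw [Complex.one_re] at h3
  rw [← h3]
  refine Finset.sum_congr rfl fun j _ => ?_
  rw [Matrix.conjTranspose_apply, mul_comm]
  change _ = ((Wᴴ * U) j i * (starRingEnd ℂ) ((Wᴴ * U) j i)).re
  rw [Complex.mul_conj, Complex.ofReal_re]; rfl

lemma ssaW_sum' {n : Type} [Fintype n] [DecidableEq n] {ρ W U : Matrix n n ℂ} {p : n → ℝ}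
    (hρ : SsaDec ρ U p) (j : n) : ∑ i, ssaW W U j i * p i = ((Wᴴ * ρ * W) j j).re := by
  have h : Wᴴ * ρ * W = (Wᴴ * U) * Matrix.diagonal (fun i => (p i : ℂ)) * (Wᴴ * U)ᴴ := by
    rw [hρ.eq]
    simp only [Matrix.conjTranspose_mul, Matrix.conjTranspose_conjTranspose, Matrix.mul_assoc]
  rw [h, Matrix.mul_apply, Complex.re_sum]
  refine Finset.sum_congr rfl fun i _ => ?_
  rw [Matrix.mul_diagonal, Matrix.conjTranspose_apply, mul_right_comm]
  change _ = ((Wᴴ * U) j i * (starRingEnd ℂ) ((Wᴴ * U) j i) * _).re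
  rw [Complex.re_mul_ofReal, Complex.mul_conj, Complex.ofReal_re]; rfl

lemma ssaW_total {n : Type} [Fintype n] [DecidableEq n] {ρ W U : Matrix n n ℂ} {p : n → ℝ}
    (hρ : SsaDec ρ U p) (hW : W * Wᴴ = 1) : ∑ j, ∑ i, ssaW W U j i * p i = ρ.trace.re := by
  simp only [ssaW_sum' hρ]
  rw [← Complex.re_sum]
  change (Matrix.trace (Wᴴ * ρ * W)).re = _
  rw [Matrix.trace_mul_comm, ← Matrix.mul_assoc, hW, Matrix.one_mul]

lemma ssaD_mono {n C : Type} [Fintype n] [DecidableEq n] [Fintype C] [DecidableEq C]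
    {ρ σ U W : Matrix (n × C) (n × C) ℂ} {p q : n × C → ℝ} {U' W' : Matrix n n ℂ} {p' q' : n → ℝ}
    (hρ : SsaDec ρ U p) (hσ : SsaDec σ W q)
    (hρ' : SsaDec (ssaPtr ρ) U' p') (hσ' : SsaDec (ssaPtr σ) W' q')
    (hs : SsaSupp W U p q) (hs' : SsaSupp W' U' p' q') :
    ssaD W' U' p' q' ≤ ssaD W U p q := by
  refine le_of_tendsto_of_tendsto (ssaG_lim hρ'.nonneg hσ'.nonneg) (ssaG_lim hρ.nonneg hσ.nonneg) ?_
  filter_upwards [Filter.eventually_ge_atTop 0] with t ht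
  rw [ssaW_total hρ hσ.right, ssaW_total hρ' hσ'.right]
  have : (ssaPtr ρ).trace = ρ.trace := by
    simp [Matrix.trace, ssaPtr, Fintype.sum_prod_type]
  rw [this]
  have := ssaG_mono hρ hσ hρ' hσ' hs hs' ht
  linarith

lemma ssaD_eq {n : Type} [Fintype n] [DecidableEq n] {ρ σ W U : Matrix n n ℂ} {p q : n → ℝ}
    (hρ : SsaDec ρ U p) (hσ : SsaDec σ W q) :
    ssaD W U p q = ∑ i, p i * Real.log (p i) - ∑ j, ((Wᴴ * ρ * W) j j).re * Real.log (q j) := by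
  have h1 : ∑ i, p i * Real.log (p i) = ∑ j, ∑ i, ssaW W U j i * p i * Real.log (p i) := by
    rw [Finset.sum_comm]
    refine Finset.sum_congr rfl fun i _ => ?_
    simp only [mul_assoc]
    rw [← Finset.sum_mul, ssaW_sum hρ.left hσ.right, one_mul]
  rw [h1]
  simp only [← ssaW_sum' hρ, ssaD, Finset.sum_mul, ← Finset.sum_sub_distrib, mul_sub]

lemma ssa_dec_exists {n : Type} [Fintype n] [DecidableEq n] {ρ : Matrix n n ℂ} (h : ρ.PosSemidef) :
    ∃ U p, SsaDec ρ U p ∧ vnEntropy ρ = -(∑ i, p i * Real.log (p i)) / Real.log 2 := by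
  refine ⟨(h.isHermitian.eigenvectorUnitary : Matrix n n ℂ), h.isHermitian.eigenvalues,
    ⟨h.eigenvalues_nonneg, ?_, ?_, ?_⟩, ?_⟩
  · rw [← Matrix.star_eq_conjTranspose]
    exact Unitary.coe_star_mul_self _
  · rw [← Matrix.star_eq_conjTranspose]
    exact Unitary.coe_mul_star_self _
  · have := h.isHermitian.spectral_theorem
    rw [Unitary.conjStarAlgAut_apply] at this
    exact this
  · unfold vnEntropy
    rw [dif_pos h.isHermitian, neg_div, Finset.sum_div, ← Finset.sum_neg_distrib]
    refine Finset.sum_congr rfl fun i _ => ?_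
    simp only [negxlog2, Real.logb]
    ring

lemma ssa_dec_kron {A B n : Type} [Fintype A] [DecidableEq A] [Fintype B] [DecidableEq B]
    [Fintype n] [DecidableEq n] (e : n ≃ A × B)
    {β V : Matrix B B ℂ} {q : B → ℝ} (h : SsaDec β V q) :
    SsaDec (((1 : Matrix A A ℂ) ⊗ₖ β).submatrix e e) (((1 : Matrix A A ℂ) ⊗ₖ V).submatrix e e)
      (fun x => q (e x).2) := by
  refine ⟨fun i => h.nonneg _, ?_, ?_, ?_⟩
  · rw [Matrix.conjTranspose_submatrix, Matrix.submatrix_mul_equiv, Matrix.conjTranspose_kronecker,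
      Matrix.conjTranspose_one, ← Matrix.mul_kronecker_mul, h.left, Matrix.one_mul,
      Matrix.one_kronecker_one, Matrix.submatrix_one_equiv]
  · rw [Matrix.conjTranspose_submatrix, Matrix.submatrix_mul_equiv, Matrix.conjTranspose_kronecker,
      Matrix.conjTranspose_one, ← Matrix.mul_kronecker_mul, h.right, Matrix.one_mul,
      Matrix.one_kronecker_one, Matrix.submatrix_one_equiv]
  · have hd : Matrix.diagonal (fun x : n => ((q (e x).2 : ℝ) : ℂ))
        = ((1 : Matrix A A ℂ) ⊗ₖ Matrix.diagonal (fun i => (q i : ℂ))).submatrix e e := by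
      rw [← Matrix.diagonal_one, Matrix.diagonal_kronecker_diagonal,
        Matrix.submatrix_diagonal_equiv]
      congr 1
      funext x
      simp
    rw [hd, Matrix.conjTranspose_submatrix, Matrix.submatrix_mul_equiv, Matrix.submatrix_mul_equiv,
      Matrix.conjTranspose_kronecker,
      Matrix.conjTranspose_one, ← Matrix.mul_kronecker_mul, ← Matrix.mul_kronecker_mul, ← h.eq,
      Matrix.one_mul, Matrix.one_mul]

lemma ssa_cond_diag {A B : Type} [Fintype A] [DecidableEq A] [Fintype B] [DecidableEq B]
    {τ : Matrix (A × B) (A × B) ℂ} {β V : Matrix B B ℂ} {q : B → ℝ} (h : SsaDec β V q)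
    (hβ : ∀ b b', β b b' = ∑ a, τ (a, b) (a, b')) (b : B) :
    ∑ a, ((((1 : Matrix A A ℂ) ⊗ₖ V)ᴴ * τ * ((1 : Matrix A A ℂ) ⊗ₖ V)) (a, b) (a, b)) = q b := by
  have h1 : Vᴴ * β * V = Matrix.diagonal (fun i => (q i : ℂ)) := by
    rw [h.eq]
    calc Vᴴ * (V * Matrix.diagonal (fun i => (q i : ℂ)) * Vᴴ) * V
        = (Vᴴ * V) * Matrix.diagonal (fun i => (q i : ℂ)) * (Vᴴ * V) := by
          simp only [Matrix.mul_assoc]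
      _ = _ := by rw [h.left, Matrix.one_mul, Matrix.mul_one]
  have h2 : (Vᴴ * β * V) b b = q b := by rw [h1, Matrix.diagonal_apply_eq]
  rw [← h2, Matrix.conjTranspose_kronecker, Matrix.conjTranspose_one]
  simp only [Matrix.mul_apply, Fintype.sum_prod_type, Matrix.kroneckerMap_apply, Matrix.one_apply,
    hβ, ite_mul, zero_mul, one_mul, mul_ite, mul_zero, Finset.sum_ite_irrel, Finset.sum_const_zero,
    Finset.sum_ite_eq, Finset.sum_ite_eq', Finset.mem_univ, if_true, Finset.mul_sum, Finset.sum_mul]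
  rw [Finset.sum_comm]
  refine Finset.sum_congr rfl fun x _ => ?_
  rw [Finset.sum_comm]

lemma ssa_cond {A B n : Type} [Fintype A] [DecidableEq A] [Fintype B] [DecidableEq B]
    [Fintype n] [DecidableEq n] (e : n ≃ A × B) {ρ U : Matrix n n ℂ} {p : n → ℝ}
    {β V : Matrix B B ℂ} {q : B → ℝ} (hρ : SsaDec ρ U p) (h : SsaDec β V q)
    (hβ : ∀ b b', β b b' = ∑ a, ρ (e.symm (a, b)) (e.symm (a, b'))) :
    SsaSupp (((1 : Matrix A A ℂ) ⊗ₖ V).submatrix e e) U p (fun x => q (e x).2) ∧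
    ssaD (((1 : Matrix A A ℂ) ⊗ₖ V).submatrix e e) U p (fun x => q (e x).2)
      = ∑ i, p i * Real.log (p i) - ∑ j, q j * Real.log (q j) := by
  set W := ((1 : Matrix A A ℂ) ⊗ₖ V).submatrix e e with hW
  have hd : ∀ x, (Wᴴ * ρ * W) (e.symm x) (e.symm x)
      = (((1 : Matrix A A ℂ) ⊗ₖ V)ᴴ * (ρ.submatrix e.symm e.symm) * ((1 : Matrix A A ℂ) ⊗ₖ V)) x x := by
    intro x
    have hr : ρ = (ρ.submatrix e.symm e.symm).submatrix e e := by ext; simp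
    conv_lhs => rw [hr]
    rw [hW, Matrix.conjTranspose_submatrix, Matrix.submatrix_mul_equiv, Matrix.submatrix_mul_equiv]
    simp
  have hs : ∀ b, ∑ a, ((Wᴴ * ρ * W) (e.symm (a, b)) (e.symm (a, b))).re = q b := by
    intro b
    rw [← Complex.re_sum]
    simp only [hd]
    rw [ssa_cond_diag h hβ, Complex.ofReal_re]
  constructor
  · intro j i hj
    simp only at hj
    have h0 := hs (e j).2
    rw [hj] at h0
    simp only [← ssaW_sum' hρ] at h0
    have hn : ∀ j i, 0 ≤ ssaW W U j i * p i := fun j i =>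
      mul_nonneg (ssaW_nonneg _ _ _ _) (hρ.nonneg i)
    rw [Finset.sum_eq_zero_iff_of_nonneg (fun a _ => Finset.sum_nonneg fun i _ => hn _ _)] at h0
    have h1 := h0 (e j).1 (Finset.mem_univ _)
    rw [Finset.sum_eq_zero_iff_of_nonneg (fun i _ => hn _ _)] at h1
    simpa using h1 i (Finset.mem_univ _)
  · rw [ssaD_eq hρ (ssa_dec_kron e h)]
    congr 1
    rw [← Equiv.sum_comp e.symm (fun j => ((Wᴴ * ρ * W) j j).re * Real.log (q (e j).2)),
      Fintype.sum_prod_type_right]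
    refine Finset.sum_congr rfl fun b _ => ?_
    simp only [Equiv.apply_symm_apply]
    rw [← Finset.sum_mul, hs]

lemma ssa_mat {A B C : Type} [Fintype A] [DecidableEq A] [Fintype B] [DecidableEq B]
    [Fintype C] [DecidableEq C] {τ : Matrix ((A × B) × C) ((A × B) × C) ℂ}
    {ρAB : Matrix (A × B) (A × B) ℂ} {ρBC : Matrix (B × C) (B × C) ℂ} {ρB : Matrix B B ℂ}
    (p1 : τ.PosSemidef) (p2 : ρAB.PosSemidef) (p3 : ρBC.PosSemidef) (p4 : ρB.PosSemidef)
    (h1 : ∀ x y, ρAB x y = ∑ c, τ (x, c) (y, c))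
    (h2 : ∀ x y, ρBC x y = ∑ a, τ ((a, x.1), x.2) ((a, y.1), y.2))
    (h3 : ∀ x y, ρB x y = ∑ a, ρAB (a, x) (a, y)) :
    vnEntropy τ + vnEntropy ρB ≤ vnEntropy ρAB + vnEntropy ρBC := by
  obtain ⟨U1, q1, d1, e1⟩ := ssa_dec_exists p1
  obtain ⟨U2, q2, d2, e2⟩ := ssa_dec_exists p2
  obtain ⟨U3, q3, d3, e3⟩ := ssa_dec_exists p3
  obtain ⟨U4, q4, d4, e4⟩ := ssa_dec_exists p4
  obtain ⟨s1, D1⟩ := ssa_cond (Equiv.prodAssoc A B C) d1 d3 (fun x y => h2 x y)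
  obtain ⟨s2, D2⟩ := ssa_cond (Equiv.refl (A × B)) d2 d4 (fun x y => h3 x y)
  have k1 := ssa_dec_kron (Equiv.prodAssoc A B C) d3
  have k2 := ssa_dec_kron (Equiv.refl (A × B)) d4
  have r1 : ρAB = ssaPtr τ := by ext x y; exact h1 x y
  have r2 : ((1 : Matrix A A ℂ) ⊗ₖ ρB).submatrix (Equiv.refl (A × B)) (Equiv.refl (A × B))
      = ssaPtr (((1 : Matrix A A ℂ) ⊗ₖ ρBC).submatrix (Equiv.prodAssoc A B C) (Equiv.prodAssoc A B C)) := by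
    ext ⟨a, b⟩ ⟨a', b'⟩
    simp only [ssaPtr, Matrix.submatrix_apply, Equiv.refl_apply, Matrix.kroneckerMap_apply,
      Equiv.prodAssoc_apply, h3, h2, h1]
    rw [Finset.sum_comm, Finset.mul_sum]
  rw [r2] at k2
  rw [r1] at d2
  have := ssaD_mono d1 k1 d2 k2 s1 s2
  rw [D1, D2] at this
  have hl : 0 < Real.log 2 := Real.log_pos (by norm_num)
  rw [e1, e2, e3, e4, ← add_div, ← add_div, div_le_div_iff_of_pos_right hl]
  linarith

lemma vnEntropy_reindex {m n : Type} [Fintype n] [DecidableEq n] [Fintype m] [DecidableEq m]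
    (e : m ≃ n) (ρ : Matrix n n ℂ) (h : ρ.IsHermitian) :
    vnEntropy (ρ.submatrix e e) = vnEntropy ρ := by
  have h' : (ρ.submatrix e e).IsHermitian := h.submatrix e
  unfold vnEntropy
  rw [dif_pos h, dif_pos h']
  have hc : (ρ.submatrix e e).charpoly = ρ.charpoly := by
    have := Matrix.charpoly_reindex e.symm ρ
    simpa [Matrix.reindex_apply] using this
  have hr := congrArg Polynomial.roots hc
  rw [h.roots_charpoly_eq_eigenvalues, h'.roots_charpoly_eq_eigenvalues] at hr
  have := congrArg (fun s => (s.map (fun z : ℂ => negxlog2 z.re)).sum) hr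
  simpa [Multiset.map_map, Function.comp_def] using this

section ssaFin

variable {ι : Type} [Fintype ι] [DecidableEq ι] {d : ι → Type}
  [∀ i, Fintype (d i)] [∀ i, DecidableEq (d i)]

def ssaGl {s t v : Finset ι} (hst : Disjoint s t) (hv : v = s ∪ t) :
    (((i : {j // j ∈ s}) → d i.1) × ((i : {j // j ∈ t}) → d i.1)) ≃
      ((i : {j // j ∈ v}) → d i.1) where
  toFun xz i := if h : i.1 ∈ s then xz.1 ⟨i.1, h⟩ else
    xz.2 ⟨i.1, by exact (Finset.mem_union.1 (hv.le i.2)).resolve_left h⟩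
  invFun y := (fun i => y ⟨i.1, by rw [hv]; exact Finset.mem_union_left _ i.2⟩,
    fun i => y ⟨i.1, by rw [hv]; exact Finset.mem_union_right _ i.2⟩)
  left_inv := by
    rintro ⟨x, z⟩
    refine Prod.ext ?_ ?_
    · funext i
      simp [i.2]
    · funext i
      have : i.1 ∉ s := fun h => Finset.disjoint_left.1 hst h i.2
      simp [this]
  right_inv := by
    intro y
    funext i
    by_cases h : i.1 ∈ s <;> simp [h]

def ssaCo {s t v : Finset ι} (hst : Disjoint s t) (hv : v = s ∪ t) :
    (((i : {j // j ∈ t}) → d i.1) × ((i : {j // j ∉ v}) → d i.1)) ≃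
      ((i : {j // j ∉ s}) → d i.1) where
  toFun xz i := if h : i.1 ∈ t then xz.1 ⟨i.1, h⟩ else
    xz.2 ⟨i.1, by rw [hv, Finset.mem_union]; have := i.2; tauto⟩
  invFun y := (fun i => y ⟨i.1, fun h => Finset.disjoint_left.1 hst h i.2⟩,
    fun i => y ⟨i.1, fun h => i.2 (hv.ge (Finset.mem_union_left _ h))⟩)
  left_inv := by
    rintro ⟨x, z⟩
    refine Prod.ext ?_ ?_
    · funext i
      simp [i.2]
    · funext i
      have : i.1 ∉ t := fun h => i.2 (hv.ge (Finset.mem_union_right _ h))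
      simp [this]
  right_inv := by
    intro y
    funext i
    by_cases h : i.1 ∈ t <;> simp [h]

lemma ssa_combine {s t v : Finset ι} (hst : Disjoint s t) (hv : v = s ∪ t)
    (x : (i : {j // j ∈ s}) → d i.1) (z : (i : {j // j ∈ t}) → d i.1)
    (w : (i : {j // j ∉ v}) → d i.1) :
    combine v (ssaGl hst hv (x, z)) w = combine s x (ssaCo hst hv (z, w)) := by
  subst hv
  funext i
  simp only [combine, ssaGl, ssaCo, Equiv.coe_fn_mk]
  by_cases h1 : i ∈ s
  · simp [h1]
  · by_cases h2 : i ∈ t <;> simp [h1, h2]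

lemma pTr_split (ρ : Matrix (∀ i, d i) (∀ i, d i) ℂ) {s t v : Finset ι} (hst : Disjoint s t)
    (hv : v = s ∪ t) (x y : (i : {j // j ∈ s}) → d i.1) :
    pTr ρ s x y = ∑ z, pTr ρ v (ssaGl hst hv (x, z)) (ssaGl hst hv (y, z)) := by
  simp only [pTr]
  rw [← (ssaCo hst hv).sum_comp, Fintype.sum_prod_type]
  simp only [ssa_combine]

lemma pTr_posSemidef {ρ : Matrix (∀ i, d i) (∀ i, d i) ℂ} (h : ρ.PosSemidef) (s : Finset ι) :
    (pTr ρ s).PosSemidef := by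
  have : pTr ρ s = ∑ z : (i : {j // j ∉ s}) → d i.1,
      ρ.submatrix (fun x => combine s x z) (fun x => combine s x z) := by
    ext x y
    simp [pTr, Matrix.sum_apply]
  rw [this]
  exact Matrix.posSemidef_sum _ fun z _ => h.submatrix _

lemma Sv_ssa {ρ : Matrix (∀ i, d i) (∀ i, d i) ℂ} (h : ρ.PosSemidef) {s t u : Finset ι}
    (hst : Disjoint s t) (hsu : Disjoint s u) (htu : Disjoint t u) :
    Sv ρ (s ∪ t ∪ u) + Sv ρ t ≤ Sv ρ (s ∪ t) + Sv ρ (t ∪ u) := by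
  have hstu : Disjoint (s ∪ t) u := Finset.disjoint_union_left.2 ⟨hsu, htu⟩
  have htus : Disjoint (t ∪ u) s := Finset.disjoint_union_left.2 ⟨hst.symm, hsu.symm⟩
  have hv : s ∪ t ∪ u = (t ∪ u) ∪ s := by
    ext; simp only [Finset.mem_union]; tauto
  let E := ((ssaGl (d := d) hst rfl).prodCongr
    (Equiv.refl ((i : {j // j ∈ u}) → d i.1))).trans (ssaGl (d := d) hstu rfl)
  have key := ssa_mat (τ := (pTr ρ (s ∪ t ∪ u)).submatrix E E)
    (ρAB := (pTr ρ (s ∪ t)).submatrix (ssaGl hst rfl) (ssaGl hst rfl))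
    (ρBC := (pTr ρ (t ∪ u)).submatrix (ssaGl htu rfl) (ssaGl htu rfl))
    (ρB := pTr ρ t)
    ((pTr_posSemidef h _).submatrix _) ((pTr_posSemidef h _).submatrix _)
    ((pTr_posSemidef h _).submatrix _) (pTr_posSemidef h _) ?_ ?_ ?_
  · rw [vnEntropy_reindex _ _ (pTr_posSemidef h _).isHermitian,
      vnEntropy_reindex _ _ (pTr_posSemidef h _).isHermitian,
      vnEntropy_reindex _ _ (pTr_posSemidef h _).isHermitian] at key
    exact key
  · intro x y
    simp only [Matrix.submatrix_apply]
    exact pTr_split ρ hstu rfl _ _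
  · have hE : ∀ (a : (i : {j // j ∈ s}) → d i.1) (x : ((i : {j // j ∈ t}) → d i.1) × ((i : {j // j ∈ u}) → d i.1)),
        ssaGl htus hv (ssaGl htu rfl x, a) = E ((a, x.1), x.2) := by
      intro a x
      funext i
      obtain ⟨i, hi⟩ := i
      simp only [E, ssaGl, Equiv.coe_fn_mk, Equiv.trans_apply, Equiv.prodCongr_apply, Prod.map,
        Equiv.refl_apply, Finset.mem_union]
      by_cases h1 : i ∈ s
      · have h2 := Finset.disjoint_left.1 hst h1
        have h3 := Finset.disjoint_left.1 hsu h1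
        simp [h1, h2, h3]
      · by_cases h2 : i ∈ t
        · simp [h1, h2]
        · have h3 : i ∈ u := by simp only [Finset.mem_union] at hi; tauto
          simp [h1, h2, h3]
    intro x y
    simp only [Matrix.submatrix_apply, ← hE]
    exact pTr_split ρ htus hv _ _
  · have hv' : s ∪ t = t ∪ s := Finset.union_comm _ _
    have hE : ∀ (a : (i : {j // j ∈ s}) → d i.1) (x : ((i : {j // j ∈ t}) → d i.1)),
        ssaGl hst.symm hv' (x, a) = ssaGl hst rfl (a, x) := by
      intro a x
      funext i
      obtain ⟨i, hi⟩ := i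
      simp only [ssaGl, Equiv.coe_fn_mk]
      by_cases h1 : i ∈ s
      · have h2 := Finset.disjoint_left.1 hst h1
        simp [h1, h2]
      · have h3 : i ∈ t := by simp only [Finset.mem_union] at hi; tauto
        simp [h1, h3]
    intro x y
    simp only [Matrix.submatrix_apply, ← hE]
    exact pTr_split ρ hst.symm hv' _ _

lemma Sv_empty {ρ : Matrix (∀ i, d i) (∀ i, d i) ℂ} (h : IsDensity ρ) : Sv ρ ∅ = 0 := by
  have hp := (pTr_posSemidef h.1 ∅).isHermitian
  have htr : (pTr ρ ∅).trace = 1 := by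
    rw [← h.2]
    simp only [Matrix.trace, Matrix.diag, pTr]
    rw [← Fintype.sum_prod_type']
    refine Fintype.sum_equiv (Equiv.ofBijective (fun xz => combine ∅ xz.1 xz.2) ⟨?_, ?_⟩) _ _
      (fun _ => rfl)
    · rintro ⟨x, z⟩ ⟨x', z'⟩ hxz
      refine Prod.ext (Subsingleton.elim _ _) ?_
      funext i
      have := congrFun hxz i.1
      simpa [combine] using this
    · intro y
      refine ⟨(fun i => absurd i.2 (Finset.notMem_empty _), fun i => y i.1), ?_⟩
      funext i
      simp [combine]
  rw [hp.trace_eq_sum_eigenvalues] at htr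
  unfold Sv vnEntropy
  rw [dif_pos hp]
  rw [Fintype.sum_unique] at htr ⊢
  have h1 : hp.eigenvalues default = 1 := Complex.ofReal_injective (by simpa using htr)
  rw [h1]
  simp [negxlog2]

lemma Sv_ssa_shrink {ρ : Matrix (∀ i, d i) (∀ i, d i) ℂ} (h : ρ.PosSemidef) {X X' R : Finset ι}
    (hX : X' ⊆ X) (hR : Disjoint X R) :
    Sv ρ (X ∪ R) + Sv ρ X' ≤ Sv ρ X + Sv ρ (X' ∪ R) := by
  have := Sv_ssa h (s := X \ X') (t := X') (u := R) Finset.sdiff_disjoint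
    (hR.mono_left Finset.sdiff_subset) (hR.mono_left hX)
  rwa [Finset.sdiff_union_of_subset hX] at this

lemma Sv_subadd {ρ : Matrix (∀ i, d i) (∀ i, d i) ℂ} (h : IsDensity ρ) {X R : Finset ι}
    (hR : Disjoint X R) : Sv ρ (X ∪ R) ≤ Sv ρ X + Sv ρ R := by
  have := Sv_ssa_shrink h.1 (Finset.empty_subset X) hR
  rw [Sv_empty h, Finset.empty_union] at this
  linarith

lemma ssa_disj_sup {P : Finset (Finset ι)} (hP : (P : Set (Finset ι)).PairwiseDisjoint id)
    {S T : Finset (Finset ι)} (hS : S ⊆ P) (hT : T ⊆ P) (hST : Disjoint S T) :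
    Disjoint (S.sup id) (T.sup id) := by
  rw [Finset.disjoint_sup_left]
  intro X hX
  rw [Finset.disjoint_sup_right]
  intro Y hY
  exact hP (hS hX) (hT hY) (fun e => Finset.disjoint_left.1 hST hX (e ▸ hY))

lemma Sv_sup_le {ρ : Matrix (∀ i, d i) (∀ i, d i) ℂ} (h : IsDensity ρ) {P : Finset (Finset ι)}
    (hP : (P : Set (Finset ι)).PairwiseDisjoint id) (T : Finset (Finset ι)) :
    T ⊆ P → Sv ρ (T.sup id) ≤ ∑ X ∈ T, Sv ρ X := by
  induction T using Finset.induction_on with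
  | empty => intro _; simp [Sv_empty h]
  | insert X T hX ih =>
    intro hT
    have hT1 : {X} ⊆ P := Finset.singleton_subset_iff.2 (hT (Finset.mem_insert_self _ _))
    have hT2 : T ⊆ P := (Finset.subset_insert _ _).trans hT
    have hd := ssa_disj_sup hP hT1 hT2 (Finset.disjoint_singleton_left.2 hX)
    rw [Finset.sup_singleton] at hd
    rw [Finset.sup_insert, Finset.sum_insert hX]
    have := Sv_subadd h hd
    have := ih hT2
    simp only [id, Finset.sup_eq_union] at *
    linarith

lemma ssa_step {ρ : Matrix (∀ i, d i) (∀ i, d i) ℂ} (h : IsDensity ρ) {P Q : Finset (Finset ι)}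
    (hP : IsPartition P) (hPQ : CoarserStep P Q) : IsPartition Q ∧ MI ρ Q ≤ MI ρ P := by
  obtain ⟨hne, hdj⟩ := hP
  cases hPQ with
  | discard hQP hQ =>
    refine ⟨⟨fun X hX => hne X (hQP hX), hdj.subset (by exact_mod_cast hQP)⟩, ?_⟩
    unfold MI
    have h1 : P.sup id = Q.sup id ∪ (P \ Q).sup id := by
      rw [← Finset.sup_eq_union, ← Finset.sup_union, Finset.union_sdiff_of_subset hQP]
    have h2 := Sv_subadd h (ssa_disj_sup hdj hQP Finset.sdiff_subset Finset.disjoint_sdiff)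
    have h3 := Sv_sup_le h hdj (P \ Q) Finset.sdiff_subset
    have h4 := Finset.sum_sdiff (f := Sv ρ) hQP
    rw [h1]
    linarith
  | merge T hT hT' =>
    have hd : ∀ X ∈ P \ T, Disjoint (T.sup id) X := by
      intro X hX
      have hX' := Finset.mem_sdiff.1 hX
      have := ssa_disj_sup hdj hT (Finset.singleton_subset_iff.2 hX'.1)
        (Finset.disjoint_singleton_right.2 hX'.2)
      rwa [Finset.sup_singleton] at this
    have hTne : (T.sup id).Nonempty := by
      obtain ⟨X, hX⟩ := hT'
      exact (hne X (hT hX)).mono (Finset.le_sup (f := id) hX)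
    have hnm : T.sup id ∉ P \ T := fun hm => by
      have := hd _ hm
      rw [disjoint_self] at this
      exact hTne.ne_empty this
    refine ⟨⟨?_, ?_⟩, ?_⟩
    · intro X hX
      rcases Finset.mem_insert.1 hX with rfl | hX
      · exact hTne
      · exact hne X (Finset.mem_sdiff.1 hX).1
    · rw [Finset.coe_insert]
      refine Set.PairwiseDisjoint.insert (hdj.subset (by exact_mod_cast Finset.sdiff_subset)) ?_
      intro X hX _
      exact hd X (by exact_mod_cast hX)
    · unfold MI
      have h1 : (insert (T.sup id) (P \ T)).sup id = P.sup id := by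
        rw [Finset.sup_insert, id, ← Finset.sup_union, Finset.union_sdiff_of_subset hT]
      have h3 := Sv_sup_le h hdj T hT
      have h4 := Finset.sum_sdiff (f := Sv ρ) hT
      rw [h1, Finset.sum_insert hnm]
      linarith
  | shrink X X' hX h2 hsub hX' =>
    have hd : ∀ Y ∈ P.erase X, Disjoint X Y := by
      intro Y hY
      have := Finset.mem_erase.1 hY
      exact hdj hX this.2 this.1.symm
    have hnm : X' ∉ P.erase X := fun hm => by
      have := (hd _ hm).mono_left hsub
      rw [disjoint_self] at this
      exact hX'.ne_empty this
    refine ⟨⟨?_, ?_⟩, ?_⟩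
    · intro Y hY
      rcases Finset.mem_insert.1 hY with rfl | hY
      · exact hX'
      · exact hne Y (Finset.mem_erase.1 hY).2
    · rw [Finset.coe_insert]
      refine Set.PairwiseDisjoint.insert (hdj.subset (by exact_mod_cast Finset.erase_subset _ _)) ?_
      intro Y hY _
      exact (hd Y (by exact_mod_cast hY)).mono_left hsub
    · unfold MI
      have hR : Disjoint X ((P.erase X).sup id) := by
        rw [Finset.disjoint_sup_right]
        exact hd
      have h1 : P.sup id = X ∪ (P.erase X).sup id := by
        conv_lhs => rw [← Finset.insert_erase hX]
        rw [Finset.sup_insert]; rfl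
      have h3 : (insert X' (P.erase X)).sup id = X' ∪ (P.erase X).sup id := by
        rw [Finset.sup_insert]; rfl
      have h4 := Finset.add_sum_erase P (Sv ρ) hX
      have h5 := Sv_ssa_shrink h.1 hsub hR
      rw [h3, h1, Finset.sum_insert hnm]
      linarith

end ssaFin

/-- If the partition `Y₁|⋯|Y_l` of (a subsystem of) an `n`-partite system is
coarser than the partition `X₁|⋯|X_k`, then for every density operator `ρ`,
`I(X₁:⋯:X_k) ≥ I(Y₁:⋯:Y_l)`. -/
theorem mutualInfo_mono_of_coarser
    {ι : Type} [Fintype ι] [DecidableEq ι] {d : ι → Type}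
    [∀ i, Fintype (d i)] [∀ i, DecidableEq (d i)]
    (ρ : Matrix (∀ i, d i) (∀ i, d i) ℂ) (hρ : IsDensity ρ)
    (P Q : Finset (Finset ι)) (hP : IsPartition P) (hPQ : Coarser P Q) :
    MI ρ Q ≤ MI ρ P := by

  have key : IsPartition Q ∧ MI ρ Q ≤ MI ρ P := by
    unfold Coarser at hPQ
    induction hPQ with
    | refl => exact ⟨hP, le_rfl⟩
    | tail _ hs ih =>
      have := ssa_step hρ ih.1 hs
      exact ⟨this.1, this.2.trans ih.2⟩
  exact key.2
end

section
/- If the partition Y_1|Y_2|⋯|Y_l of (a subsystem of) an n-partite quantum system A_1A_2⋯A_n is coarser than the partition X_1|X_2|⋯|X_k (i.e., X_1|⋯|X_k ≻ Y_1|⋯|Y_l), then for every density operator ρ on H^{A_1}⊗⋯⊗H^{A_n} one has I'(X_1:X_2:⋯:X_k) ≥ I'(Y_1:Y_2:⋯:Y_l). -/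
open scoped BigOperators ComplexOrder
open Matrix

lemma ent_of_roots {n : Type} [Fintype n] [DecidableEq n] {m : Type} [Fintype m] 
    (M : Matrix n n ℂ) (hM : M.IsHermitian)
    (l : m → ℝ) (h : M.charpoly.roots = Multiset.map (fun i => (l i : ℂ)) Finset.univ.val) :
    vnEntropy M = ∑ i, negxlog2 (l i) := by
  unfold vnEntropy
  rw [dif_pos hM]
  rw [hM.roots_charpoly_eq_eigenvalues] at h
  have h2 := congrArg (Multiset.map Complex.re) h
  simp only [Multiset.map_map] at h2
  have h3 := congrArg (fun s => (Multiset.map negxlog2 s).sum) h2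
  simp only [Multiset.map_map] at h3
  exact h3

lemma roots_prod_aux {n : Type} [Fintype n] (l : n → ℝ) :
    (∏ i, (Polynomial.X - Polynomial.C (l i : ℂ))).roots
      = Multiset.map (fun i => (l i : ℂ)) Finset.univ.val := by
  have := Polynomial.roots_multiset_prod_X_sub_C (Multiset.map (fun i => (l i : ℂ)) Finset.univ.val)
  rw [Multiset.map_map] at this
  exact this

lemma ent_of_diag {n : Type} [Fintype n] [DecidableEq n]
    (M U : Matrix n n ℂ) (l : n → ℝ) (hU : Uᴴ * U = 1)
    (h : M = U * diagonal (fun i => (l i : ℂ)) * Uᴴ) :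
    vnEntropy M = ∑ i, negxlog2 (l i) := by
  apply ent_of_roots
  · rw [h, Matrix.IsHermitian]
    simp [Matrix.conjTranspose_mul, Matrix.diagonal_conjTranspose, Matrix.mul_assoc]
    congr 3
    ext i
    simp
  · rw [h, Matrix.charpoly_mul_comm, ← Matrix.mul_assoc, hU, Matrix.one_mul, Matrix.charpoly_diagonal]
    exact roots_prod_aux l

lemma ent_submatrix {n m : Type} [Fintype n] [DecidableEq n] [Fintype m] [DecidableEq m]
    (M : Matrix n n ℂ) (hM : M.IsHermitian) (e : m ≃ n) :
    vnEntropy (M.submatrix e e) = vnEntropy M := by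
  have h1 : vnEntropy M = ∑ i, negxlog2 (hM.eigenvalues i) := by
    unfold vnEntropy
    rw [dif_pos hM]
  rw [h1]
  apply ent_of_roots _ (hM.submatrix _)
  have := Matrix.charpoly_reindex e.symm M
  rw [Matrix.reindex_apply] at this
  simp only [Equiv.symm_symm] at this
  rw [this, hM.roots_charpoly_eq_eigenvalues]
  rfl

lemma exists_diag {n : Type} [Fintype n] [DecidableEq n]
    (M : Matrix n n ℂ) (hM : M.PosSemidef) :
    ∃ (U : Matrix n n ℂ) (l : n → ℝ), Uᴴ * U = 1 ∧ U * Uᴴ = 1 ∧ (∀ i, 0 ≤ l i) ∧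
     M = U * diagonal (fun i => (l i : ℂ)) * Uᴴ := by
  refine ⟨hM.1.eigenvectorUnitary, hM.1.eigenvalues, ?_, ?_, hM.eigenvalues_nonneg, ?_⟩
  · exact Matrix.mem_unitaryGroup_iff'.1 hM.1.eigenvectorUnitary.2
  · exact Matrix.mem_unitaryGroup_iff.1 hM.1.eigenvectorUnitary.2
  · have := hM.1.spectral_theorem
    exact this

/-- shifted version -/
lemma ent_shift {n : Type} [Fintype n] [DecidableEq n]
    (M : Matrix n n ℂ) (hM : M.PosSemidef) :
    Continuous (fun c : ℝ => vnEntropy (M + (c : ℂ) • 1)) := by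
  obtain ⟨U, l, h1, h2, h3, h4⟩ := exists_diag M hM
  have : (fun c : ℝ => vnEntropy (M + (c : ℂ) • 1)) = fun c => ∑ i, negxlog2 (l i + c) := by
    ext c
    apply ent_of_diag _ U _ h1
    have : (diagonal fun i => ((l i + c : ℝ) : ℂ)) = diagonal (fun i => (l i : ℂ)) + (c : ℂ) • 1 := by
      ext i j
      by_cases h : i = j <;> simp [h, Matrix.diagonal]
    rw [this, Matrix.mul_add, Matrix.add_mul, ← h4]
    simp [h2]
  rw [this]
  have hc : Continuous negxlog2 := by
    have : negxlog2 = fun x => Real.negMulLog x / Real.log 2 := by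
      ext x; simp [negxlog2, Real.negMulLog, Real.logb]; ring
    rw [this]
    exact Real.continuous_negMulLog.div_const _
  fun_prop

lemma pt_ineq (y z : ℂ) (m : ℝ) (hm : 0 < m) :
    2 * (star y * z).re - m * Complex.normSq y ≤ Complex.normSq z / m := by
  rw [le_div_iff₀ hm]
  simp [Complex.normSq_apply]
  nlinarith [sq_nonneg (m * y.re - z.re), sq_nonneg (m * y.im - z.im)]

lemma pt_eq (z : ℂ) (m : ℝ) (hm : 0 < m) :
    2 * (star (z / m) * z).re - m * Complex.normSq (z / m) = Complex.normSq z / m := by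
  have h1 : (z / (m:ℂ)).re = z.re / m := by simp
  have h2 : (z / (m:ℂ)).im = z.im / m := by simp
  simp only [Complex.star_def, Complex.mul_re, Complex.conj_re, Complex.conj_im, Complex.normSq_apply, h1, h2]
  field_simp
  ring

/-- the functional -/
noncomputable def Fun {n : Type} [Fintype n] [DecidableEq n] (t : ℝ) (ρ σ X : Matrix n n ℂ) : ℝ :=
  (2 * (Xᴴ * ρ).trace - (Xᴴ * σ * X).trace - t * (Xᴴ * X * ρ).trace).re

lemma Fun_eq {n : Type} [Fintype n] [DecidableEq n] (t : ℝ) (U V Y : Matrix n n ℂ) (p q : n → ℝ)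
    (hU : Uᴴ * U = 1) (hV : Vᴴ * V = 1) :
    Fun t (U * diagonal (fun i => (p i : ℂ)) * Uᴴ) (V * diagonal (fun i => (q i : ℂ)) * Vᴴ) (V * Y * Uᴴ)
     = ∑ i, ∑ j, (2 * (star (Y j i) * ((Vᴴ * U) j i * p i)).re - (q j + t * p i) * Complex.normSq (Y j i)) := by
  set P := diagonal (fun i => (p i : ℂ))
  set Q := diagonal (fun i => (q i : ℂ))
  have e1 : ((V * Y * Uᴴ)ᴴ * (U * P * Uᴴ)).trace = (Yᴴ * (Vᴴ * U * P)).trace := by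
    calc _ = (U * (Yᴴ * (Vᴴ * U * P * Uᴴ))).trace := by simp [Matrix.mul_assoc]
      _ = ((Yᴴ * (Vᴴ * U * P)) * (Uᴴ * U)).trace := by rw [Matrix.trace_mul_comm]; simp only [Matrix.mul_assoc]
      _ = _ := by rw [hU, Matrix.mul_one]
  have e2 : ((V * Y * Uᴴ)ᴴ * (V * Q * Vᴴ) * (V * Y * Uᴴ)).trace = (Yᴴ * (Q * Y)).trace := by
    calc _ = (U * (Yᴴ * ((Vᴴ * V) * (Q * ((Vᴴ * V) * (Y * Uᴴ)))))).trace := by simp [Matrix.mul_assoc]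
      _ = ((Yᴴ * (Q * Y)) * (Uᴴ * U)).trace := by 
        rw [hV, Matrix.trace_mul_comm]; simp only [Matrix.one_mul, Matrix.mul_assoc]
      _ = _ := by rw [hU, Matrix.mul_one]
  have e3 : ((V * Y * Uᴴ)ᴴ * (V * Y * Uᴴ) * (U * P * Uᴴ)).trace = (Yᴴ * (Y * P)).trace := by
    calc _ = (U * (Yᴴ * ((Vᴴ * V) * (Y * ((Uᴴ * U) * (P * Uᴴ)))))).trace := by simp [Matrix.mul_assoc]
      _ = ((Yᴴ * (Y * P)) * (Uᴴ * U)).trace := by 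
        rw [hV, hU, Matrix.trace_mul_comm]; simp only [Matrix.one_mul, Matrix.mul_assoc, hU]
      _ = _ := by rw [hU, Matrix.mul_one]
  rw [Fun, e1, e2, e3]
  generalize Vᴴ * U = W
  simp only [Matrix.trace, Matrix.diag, Matrix.mul_apply (M := Yᴴ), P, Q, Matrix.mul_diagonal, Matrix.diagonal_mul, Finset.mul_sum, 
    ← Finset.sum_sub_distrib, Complex.re_sum, Matrix.conjTranspose_apply]
  refine Finset.sum_congr rfl fun i _ => Finset.sum_congr rfl fun j _ => ?_
  simp [Complex.normSq_apply]
  ring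

/-- spectral value -/
noncomputable def Fval {n : Type} [Fintype n] [DecidableEq n] (t : ℝ) (U V : Matrix n n ℂ) (p q : n → ℝ) : ℝ :=
  ∑ i, ∑ j, Complex.normSq ((Vᴴ * U) j i) * p i ^ 2 / (q j + t * p i)

lemma Fun_le {n : Type} [Fintype n] [DecidableEq n] (t : ℝ) (ht : 0 ≤ t) (U V X : Matrix n n ℂ) (p q : n → ℝ)
    (hU : Uᴴ * U = 1) (hV : Vᴴ * V = 1) (hp : ∀ i, 0 < p i) (hq : ∀ i, 0 < q i) :
    Fun t (U * diagonal (fun i => (p i : ℂ)) * Uᴴ) (V * diagonal (fun i => (q i : ℂ)) * Vᴴ) X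
     ≤ Fval t U V p q := by
  have hV' := mul_eq_one_comm.1 hV
  have hU' := mul_eq_one_comm.1 hU
  have : X = V * (Vᴴ * X * U) * Uᴴ := by
    calc X = (V * Vᴴ) * X * (U * Uᴴ) := by rw [hV', hU']; simp
      _ = _ := by simp only [Matrix.mul_assoc]
  rw [this, Fun_eq _ _ _ _ _ _ hU hV]
  refine Finset.sum_le_sum fun i _ => Finset.sum_le_sum fun j _ => ?_
  refine (pt_ineq _ _ _ (by have := mul_nonneg ht (hp i).le; linarith [hq j])).trans (le_of_eq ?_)
  simp [Complex.normSq_mul, Complex.normSq_ofReal, sq]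

lemma Fun_attained {n : Type} [Fintype n] [DecidableEq n] (t : ℝ) (ht : 0 ≤ t) (U V : Matrix n n ℂ) (p q : n → ℝ)
    (hU : Uᴴ * U = 1) (hV : Vᴴ * V = 1) (hp : ∀ i, 0 < p i) (hq : ∀ i, 0 < q i) :
    ∃ X, Fun t (U * diagonal (fun i => (p i : ℂ)) * Uᴴ) (V * diagonal (fun i => (q i : ℂ)) * Vᴴ) X
     = Fval t U V p q := by
  refine ⟨V * (Matrix.of fun j i => ((Vᴴ * U) j i * p i) / ((q j + t * p i : ℝ) : ℂ)) * Uᴴ, ?_⟩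
  rw [Fun_eq _ _ _ _ _ _ hU hV]
  refine Finset.sum_congr rfl fun i _ => Finset.sum_congr rfl fun j _ => ?_
  rw [Matrix.of_apply, pt_eq _ _ (by have := mul_nonneg ht (hp i).le; linarith [hq j])]
  simp [Complex.normSq_mul, Complex.normSq_ofReal, sq]

set_option linter.unusedSectionVars false
set_option linter.unusedSimpArgs false

open scoped Kronecker

lemma w_sum {n : Type} [Fintype n] [DecidableEq n] (U V : Matrix n n ℂ)
    (p f : n → ℝ) :
    ∑ i, ∑ j, Complex.normSq ((Vᴴ * U) j i) * p i * f j =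
     ((V * diagonal (fun i => (f i : ℂ)) * Vᴴ) * (U * diagonal (fun i => (p i : ℂ)) * Uᴴ)).trace.re := by
  set W := Vᴴ * U with hW
  have hW' : Wᴴ = Uᴴ * V := by simp [hW]
  have : ((V * diagonal (fun i => (f i : ℂ)) * Vᴴ) * (U * diagonal (fun i => (p i : ℂ)) * Uᴴ)).trace
     = (Wᴴ * (diagonal (fun i => (f i : ℂ)) * (W * diagonal (fun i => (p i : ℂ))))).trace := by
    rw [← Matrix.mul_assoc, Matrix.trace_mul_comm, hW', hW]
    simp only [Matrix.mul_assoc]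
  rw [this]
  simp only [Matrix.trace, Matrix.diag, Matrix.mul_apply (M := Wᴴ), Matrix.mul_diagonal, Matrix.diagonal_mul,
    Complex.re_sum, Matrix.conjTranspose_apply]
  refine Finset.sum_congr rfl fun i _ => Finset.sum_congr rfl fun j _ => ?_
  simp [Complex.normSq_apply]
  ring

lemma log_lim (p q : ℝ) (hp : 0 < p) (hq : 0 < q) :
    Filter.Tendsto (fun T : ℝ => Real.log (q + T * p) - Real.log T) Filter.atTop (nhds (Real.log p)) := by
  have h1 : Filter.Tendsto (fun T : ℝ => Real.log (q * T⁻¹ + p)) Filter.atTop (nhds (Real.log (q * 0 + p))) := by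
    apply Filter.Tendsto.log
    · exact ((tendsto_inv_atTop_zero).const_mul q).add_const p
    · simp [hp.ne']
  simp only [mul_zero, zero_add] at h1
  refine h1.congr' ?_
  filter_upwards [Filter.eventually_gt_atTop 0] with T hT
  rw [← Real.log_div (by positivity) hT.ne']
  congr 1
  field_simp

lemma D_mono {n m : Type} [Fintype n] [Fintype m] (w : n → n → ℝ) (w' : m → m → ℝ)
    (p q : n → ℝ) (p' q' : m → ℝ) (hp : ∀ i, 0 < p i) (hq : ∀ i, 0 < q i)
    (hp' : ∀ i, 0 < p' i) (hq' : ∀ i, 0 < q' i)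
    (hF : ∀ t : ℝ, 0 ≤ t → ∑ i, ∑ j, w' j i * p' i ^ 2 / (q' j + t * p' i)
      ≤ ∑ i, ∑ j, w j i * p i ^ 2 / (q j + t * p i))
    (htr : ∑ i, ∑ j, w' j i * p' i = ∑ i, ∑ j, w j i * p i) :
    ∑ i, ∑ j, w' j i * p' i * (Real.log (p' i) - Real.log (q' j))
      ≤ ∑ i, ∑ j, w j i * p i * (Real.log (p i) - Real.log (q j)) := by
  have hd : ∀ {n : Type} [Fintype n] (w : n → n → ℝ) (p q : n → ℝ) (_ : ∀ i, 0 < p i) (_ : ∀ i, 0 < q i)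
      (t : ℝ) (_ : 0 ≤ t), HasDerivAt (fun T => ∑ i, ∑ j, w j i * p i * (Real.log (q j + T * p i) - Real.log (q j)))
        (∑ i, ∑ j, w j i * p i ^ 2 / (q j + t * p i)) t := by
    intro n _ w p q hp hq t ht
    refine HasDerivAt.fun_sum fun i _ => HasDerivAt.fun_sum fun j _ => ?_
    have hpos : 0 < q j + t * p i := by have := mul_nonneg ht (hp i).le; linarith [hq j]
    have h1 : HasDerivAt (fun T => q j + T * p i) (p i) t := by
      simpa using ((hasDerivAt_id t).mul_const (p i)).const_add (q j)
    have := ((h1.log hpos.ne').sub_const (Real.log (q j))).const_mul (w j i * p i)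
    exact this.congr_deriv (by ring)
  have hl : ∀ {n : Type} [Fintype n] (w : n → n → ℝ) (p q : n → ℝ) (_ : ∀ i, 0 < p i) (_ : ∀ i, 0 < q i),
      Filter.Tendsto (fun T : ℝ => (∑ i, ∑ j, w j i * p i * (Real.log (q j + T * p i) - Real.log (q j))) -
        (∑ i, ∑ j, w j i * p i) * Real.log T) Filter.atTop
       (nhds (∑ i, ∑ j, w j i * p i * (Real.log (p i) - Real.log (q j)))) := by
    intro n _ w p q hp hq
    have : (fun T : ℝ => (∑ i, ∑ j, w j i * p i * (Real.log (q j + T * p i) - Real.log (q j))) -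
        (∑ i, ∑ j, w j i * p i) * Real.log T) = fun T => ∑ i, ∑ j, w j i * p i * ((Real.log (q j + T * p i) - Real.log T) - Real.log (q j)) := by
      ext T
      simp only [Finset.sum_mul, ← Finset.sum_sub_distrib]
      refine Finset.sum_congr rfl fun i _ => Finset.sum_congr rfl fun j _ => ?_
      ring
    rw [this]
    refine tendsto_finsetSum _ fun i _ => tendsto_finsetSum _ fun j _ => ?_
    exact ((log_lim _ _ (hp i) (hq j)).sub_const _).const_mul _
  refine le_of_tendsto_of_tendsto (hl w' p' q' hp' hq') (hl w p q hp hq) ?_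
  filter_upwards [Filter.eventually_ge_atTop 0] with T hT
  rw [htr]
  apply sub_le_sub_right
  have hm : MonotoneOn (fun T => (∑ i, ∑ j, w j i * p i * (Real.log (q j + T * p i) - Real.log (q j)))
    - (∑ i, ∑ j, w' j i * p' i * (Real.log (q' j + T * p' i) - Real.log (q' j)))) (Set.Ici 0) := by
    have hD : ∀ t : ℝ, 0 ≤ t → _ := fun t ht => (hd w p q hp hq t ht).fun_sub (hd w' p' q' hp' hq' t ht)
    apply monotoneOn_of_deriv_nonneg (convex_Ici 0)
    · intro t ht
      exact (hD t ht).continuousAt.continuousWithinAt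
    · intro t ht
      rw [interior_Ici] at ht
      exact (hD t (le_of_lt ht)).differentiableAt.differentiableWithinAt
    · intro t ht
      rw [interior_Ici] at ht
      rw [(hD t (le_of_lt ht)).deriv]
      linarith [hF t (le_of_lt ht)]
  have := hm (Set.mem_Ici.2 le_rfl) (Set.mem_Ici.2 hT) hT
  simp only [zero_mul, add_zero, sub_self, mul_zero, Finset.sum_const_zero] at this
  linarith

/-- trace out right factor -/
def rL {x c : Type} [Fintype c] (M : Matrix (x × c) (x × c) ℂ) : Matrix x x ℂ :=
  fun i j => ∑ k, M (i, k) (j, k)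

/-- trace out first factor -/
def rM {a b c : Type} [Fintype a] (M : Matrix ((a × b) × c) ((a × b) × c) ℂ) : Matrix (b × c) (b × c) ℂ :=
  fun i j => ∑ k, M ((k, i.1), i.2) ((k, j.1), j.2)

lemma tr_rL {x c : Type} [Fintype c] [Fintype x] [DecidableEq c] (Y : Matrix x x ℂ) (M : Matrix (x × c) (x × c) ℂ) :
    ((Y ⊗ₖ (1 : Matrix c c ℂ)) * M).trace = (Y * rL M).trace := by
  simp only [Matrix.trace, Matrix.diag, Matrix.mul_apply, Fintype.sum_prod_type, rL, Matrix.kronecker_apply,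
    Matrix.one_apply, Finset.mul_sum]
  refine Finset.sum_congr rfl fun i _ => ?_
  rw [Finset.sum_comm]
  refine Finset.sum_congr rfl fun j _ => ?_
  simp

/-- lift -/
def Lft (a : Type) {b c : Type} [DecidableEq a] (X : Matrix (b × c) (b × c) ℂ) : Matrix ((a × b) × c) ((a × b) × c) ℂ :=
  ((1 : Matrix a a ℂ) ⊗ₖ X).submatrix (Equiv.prodAssoc a b c) (Equiv.prodAssoc a b c)

section
variable {a b c : Type} [Fintype a] [Fintype b] [Fintype c] [DecidableEq a] [DecidableEq b] [DecidableEq c]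

lemma tr_rM (Y : Matrix (b × c) (b × c) ℂ) (M : Matrix ((a × b) × c) ((a × b) × c) ℂ) :
    (Lft a Y * M).trace = (Y * rM M).trace := by
  simp only [Matrix.trace, Matrix.diag, Matrix.mul_apply, Fintype.sum_prod_type, rM, Lft, Matrix.submatrix_apply,
    Equiv.prodAssoc_apply, Matrix.kronecker_apply,
    Matrix.one_apply, Finset.mul_sum]
  rw [Finset.sum_comm]
  refine Finset.sum_congr rfl fun i _ => ?_
  rw [Finset.sum_comm]
  refine Finset.sum_congr rfl fun j _ => ?_
  simp only [ite_mul, one_mul, zero_mul, Finset.sum_ite_irrel, Finset.sum_const_zero, Finset.sum_ite_eq, Finset.mem_univ, if_true]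
  rw [Finset.sum_comm]
  refine Finset.sum_congr rfl fun k _ => ?_
  rw [Finset.sum_comm]

lemma Lft_mul (X Y : Matrix (b × c) (b × c) ℂ) : Lft a X * Lft a Y = Lft a (X * Y) := by
  simp [Lft, Matrix.submatrix_mul_equiv, ← Matrix.mul_kronecker_mul]

lemma Lft_ct (X : Matrix (b × c) (b × c) ℂ) : (Lft a X)ᴴ = Lft a Xᴴ := by
  simp [Lft, Matrix.conjTranspose_kronecker]

lemma rM_rL (M : Matrix ((a × b) × c) ((a × b) × c) ℂ) :
    rM ((rL M) ⊗ₖ (1 : Matrix c c ℂ)) = (rL (rM M)) ⊗ₖ (1 : Matrix c c ℂ) := by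
  ext i j
  simp only [rM, rL, Matrix.kronecker_apply, ← Finset.sum_mul]
  congr 1
  rw [Finset.sum_comm]
  rfl

lemma tr_same (M : Matrix ((a × b) × c) ((a × b) × c) ℂ) : (rM M).trace = M.trace := by
  have := tr_rM (1 : Matrix (b × c) (b × c) ℂ) M
  rw [Matrix.one_mul] at this
  rw [← this]
  simp [Lft]

lemma Fun_Lft (t : ℝ) (M N : Matrix ((a × b) × c) ((a × b) × c) ℂ) (X : Matrix (b × c) (b × c) ℂ) :
    Fun t M N (Lft a X) = Fun t (rM M) (rM N) X := by
  unfold Fun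
  have e2 : ((Lft a X)ᴴ * N * Lft a X).trace = (Xᴴ * rM N * X).trace := by
    rw [Matrix.trace_mul_comm, ← Matrix.mul_assoc, Lft_ct, Lft_mul, tr_rM, Matrix.mul_assoc, Matrix.trace_mul_comm]
  rw [e2, Lft_ct, Lft_mul, tr_rM, tr_rM]

end

lemma kron_unit {x c : Type} [Fintype c] [Fintype x] [DecidableEq c] [DecidableEq x] (V : Matrix x x ℂ)
    (hV : Vᴴ * V = 1) : (V ⊗ₖ (1 : Matrix c c ℂ))ᴴ * (V ⊗ₖ (1 : Matrix c c ℂ)) = 1 := by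
  simp [Matrix.conjTranspose_kronecker, ← Matrix.mul_kronecker_mul, hV]

lemma kron_diag {x c : Type} [Fintype c] [Fintype x] [DecidableEq c] [DecidableEq x] (V : Matrix x x ℂ)
    (l : x → ℝ) : (V * diagonal (fun i => (l i : ℂ)) * Vᴴ) ⊗ₖ (1 : Matrix c c ℂ) =
      (V ⊗ₖ (1 : Matrix c c ℂ)) * diagonal (fun i : x × c => (l i.1 : ℂ)) * (V ⊗ₖ (1 : Matrix c c ℂ))ᴴ := by
  have : (diagonal (fun i : x × c => (l i.1 : ℂ))) = diagonal (fun i => (l i : ℂ)) ⊗ₖ (1 : Matrix c c ℂ) := by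
    rw [← Matrix.diagonal_one, Matrix.diagonal_kronecker_diagonal]; simp
  rw [this]
  simp [Matrix.conjTranspose_kronecker, ← Matrix.mul_kronecker_mul]

lemma cond_val {x c : Type} [Fintype c] [Fintype x] [DecidableEq c] [DecidableEq x]
    (M U : Matrix (x × c) (x × c) ℂ) (p : x × c → ℝ) (V : Matrix x x ℂ) (l : x → ℝ)
    (hU : Uᴴ * U = 1) (hV : Vᴴ * V = 1) (hM : M = U * diagonal (fun i => (p i : ℂ)) * Uᴴ)
    (hN : rL M = V * diagonal (fun i => (l i : ℂ)) * Vᴴ) :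
    ∑ i, ∑ j, Complex.normSq (((V ⊗ₖ (1 : Matrix c c ℂ))ᴴ * U) j i) * p i * (Real.log (p i) - Real.log (l j.1))
      = Real.log 2 * (vnEntropy (rL M) - vnEntropy M) := by
  rw [ent_of_diag _ U p hU hM, ent_of_diag _ V l hV hN]
  have hlog : Real.log 2 ≠ 0 := (Real.log_pos (by norm_num)).ne'
  have h1 := w_sum U (V ⊗ₖ (1 : Matrix c c ℂ)) (fun i => p i * Real.log (p i)) (fun _ => 1)
  have h2 := w_sum U (V ⊗ₖ (1 : Matrix c c ℂ)) p (fun i => Real.log (l i.1))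
  rw [← hM, ← kron_diag V (fun i => Real.log (l i)), tr_rL, hN] at h2
  have e2 : ((V * diagonal (fun i => (Real.log (l i) : ℂ)) * Vᴴ) * (V * diagonal (fun i => (l i : ℂ)) * Vᴴ)).trace.re
      = ∑ i, Real.log (l i) * l i := by
    calc _ = (V * (diagonal (fun i => (Real.log (l i) : ℂ)) * ((Vᴴ * V) * diagonal (fun i => (l i : ℂ)) * Vᴴ))).trace.re := by
          simp only [Matrix.mul_assoc]
      _ = _ := by
        rw [hV, Matrix.trace_mul_comm, Matrix.one_mul, ← Matrix.mul_assoc, Matrix.mul_assoc, hV, Matrix.mul_one, Matrix.diagonal_mul_diagonal, Matrix.trace_diagonal, Complex.re_sum]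
        refine Finset.sum_congr rfl fun i _ => ?_
        rw [← Complex.ofReal_mul, Complex.ofReal_re]
  rw [e2] at h2
  have hV' : (V ⊗ₖ (1 : Matrix c c ℂ)) * (V ⊗ₖ (1 : Matrix c c ℂ))ᴴ = 1 := mul_eq_one_comm.1 (kron_unit V hV)
  have e1 : ((V ⊗ₖ (1 : Matrix c c ℂ)) * diagonal (fun _ => ((1 : ℝ) : ℂ)) * (V ⊗ₖ (1 : Matrix c c ℂ))ᴴ *
    (U * diagonal (fun i => ((p i * Real.log (p i) : ℝ) : ℂ)) * Uᴴ)).trace.re = ∑ i, p i * Real.log (p i) := by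
    rw [Complex.ofReal_one, Matrix.diagonal_one, Matrix.mul_one, hV', Matrix.one_mul, Matrix.mul_assoc, Matrix.trace_mul_comm, Matrix.mul_assoc, hU, Matrix.mul_one,
      Matrix.trace_diagonal, Complex.re_sum]
    rfl
  rw [e1] at h1
  have : ∑ i, ∑ j, Complex.normSq (((V ⊗ₖ (1 : Matrix c c ℂ))ᴴ * U) j i) * p i * (Real.log (p i) - Real.log (l j.1))
     = ∑ i, p i * Real.log (p i) - ∑ i, Real.log (l i) * l i := by
    rw [← h1, ← h2]
    simp only [← Finset.sum_sub_distrib]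
    refine Finset.sum_congr rfl fun i _ => Finset.sum_congr rfl fun j _ => ?_
    ring
  rw [this, mul_sub, Finset.mul_sum, Finset.mul_sum]
  have e3 : ∀ y : ℝ, Real.log 2 * negxlog2 y = - (y * Real.log y) := by
    intro y
    rw [negxlog2, Real.logb]
    field_simp
  simp only [e3, Finset.sum_neg_distrib, mul_comm (Real.log _)]
  ring

section
variable {a b c : Type} [Fintype a] [Fintype b] [Fintype c] [DecidableEq a] [DecidableEq b] [DecidableEq c]

lemma ssa_core (M U : Matrix ((a × b) × c) ((a × b) × c) ℂ) (p : (a × b) × c → ℝ)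
    (V : Matrix (a × b) (a × b) ℂ) (l : a × b → ℝ)
    (U' : Matrix (b × c) (b × c) ℂ) (p' : b × c → ℝ)
    (V' : Matrix b b ℂ) (l' : b → ℝ)
    (hU : Uᴴ * U = 1) (hV : Vᴴ * V = 1) (hU' : U'ᴴ * U' = 1) (hV' : V'ᴴ * V' = 1)
    (hp : ∀ i, 0 < p i) (hl : ∀ i, 0 < l i) (hp' : ∀ i, 0 < p' i) (hl' : ∀ i, 0 < l' i)
    (hM : M = U * diagonal (fun i => (p i : ℂ)) * Uᴴ)
    (hN : rL M = V * diagonal (fun i => (l i : ℂ)) * Vᴴ)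
    (hM' : rM M = U' * diagonal (fun i => (p' i : ℂ)) * U'ᴴ)
    (hN' : rL (rM M) = V' * diagonal (fun i => (l' i : ℂ)) * V'ᴴ) :
    vnEntropy M + vnEntropy (rL (rM M)) ≤ vnEntropy (rL M) + vnEntropy (rM M) := by
  have key := D_mono
    (fun j i => Complex.normSq (((V ⊗ₖ (1 : Matrix c c ℂ))ᴴ * U) j i))
    (fun j i => Complex.normSq (((V' ⊗ₖ (1 : Matrix c c ℂ))ᴴ * U') j i))
    p (fun j => l j.1) p' (fun j => l' j.1) hp (fun i => hl _) hp' (fun i => hl' _) ?_ ?_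
  · rw [cond_val M U p V l hU hV hM hN, cond_val (rM M) U' p' V' l' hU' hV' hM' hN'] at key
    have hlog : 0 < Real.log 2 := Real.log_pos (by norm_num)
    have := le_of_mul_le_mul_left key hlog
    linarith
  · intro t ht
    obtain ⟨X, hX⟩ := Fun_attained t ht U' (V' ⊗ₖ (1 : Matrix c c ℂ)) p' (fun j => l' j.1) hU' (kron_unit V' hV') hp'
      (fun i => hl' _)
    have h2 := Fun_le t ht U (V ⊗ₖ (1 : Matrix c c ℂ)) (Lft a X) p (fun j => l j.1) hU (kron_unit V hV) hp
      (fun i => hl _)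
    rw [← kron_diag, ← hM, ← hN, Fun_Lft, rM_rL] at h2
    rw [← kron_diag, ← hM', ← hN'] at hX
    rw [hX] at h2
    exact h2
  · have h1 := w_sum U (V ⊗ₖ (1 : Matrix c c ℂ)) p (fun _ => 1)
    have h2 := w_sum U' (V' ⊗ₖ (1 : Matrix c c ℂ)) p' (fun _ => 1)
    simp only [Complex.ofReal_one, Matrix.diagonal_one, Matrix.mul_one, mul_eq_one_comm.1 (kron_unit (c := c) V hV),
      mul_eq_one_comm.1 (kron_unit (c := c) V' hV'), Matrix.one_mul, mul_one, ← hM, ← hM', tr_same] at h1 h2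
    rw [h1, h2]

lemma exists_diag_pos {n : Type} [Fintype n] [DecidableEq n]
    (M : Matrix n n ℂ) (hM : M.PosSemidef) (e : ℝ) (he : 0 < e) :
    ∃ (U : Matrix n n ℂ) (l : n → ℝ), Uᴴ * U = 1 ∧ (∀ i, 0 < l i) ∧
     M + (e : ℂ) • 1 = U * diagonal (fun i => (l i : ℂ)) * Uᴴ := by
  obtain ⟨U, l, h1, h2, h3, h4⟩ := exists_diag M hM
  refine ⟨U, fun i => l i + e, h1, fun i => by linarith [h3 i], ?_⟩
  have : (diagonal fun i => ((l i + e : ℝ) : ℂ)) = diagonal (fun i => (l i : ℂ)) + (e : ℂ) • 1 := by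
    ext i j
    by_cases h : i = j <;> simp [h, Matrix.diagonal]
  rw [this, Matrix.mul_add, Matrix.add_mul, ← h4]
  simp [h2]

lemma rL_psd {x c : Type} [Fintype c] [Fintype x] (M : Matrix (x × c) (x × c) ℂ) (hM : M.PosSemidef) :
    (rL M).PosSemidef := by
  have : rL M = ∑ k, M.submatrix (fun i => (i, k)) (fun i => (i, k)) := by
    ext i j; simp [rL, Matrix.sum_apply]
  rw [this]
  exact Matrix.posSemidef_sum _ fun k _ => hM.submatrix _

lemma rM_psd (M : Matrix ((a × b) × c) ((a × b) × c) ℂ) (hM : M.PosSemidef) :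
    (rM M).PosSemidef := by
  have : rM M = ∑ k, M.submatrix (fun i => ((k, i.1), i.2)) (fun i => ((k, i.1), i.2)) := by
    ext i j; simp [rM, Matrix.sum_apply]
  rw [this]
  exact Matrix.posSemidef_sum _ fun k _ => hM.submatrix _

lemma rL_shift {x c : Type} [Fintype c] [Fintype x] [DecidableEq c] [DecidableEq x] (M : Matrix (x × c) (x × c) ℂ) (e : ℝ) :
    rL (M + (e : ℂ) • 1) = rL M + ((Fintype.card c * e : ℝ) : ℂ) • 1 := by
  ext i j
  simp [rL, Finset.sum_add_distrib, Matrix.one_apply]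

lemma rM_shift (M : Matrix ((a × b) × c) ((a × b) × c) ℂ) (e : ℝ) :
    rM (M + (e : ℂ) • 1) = rM M + ((Fintype.card a * e : ℝ) : ℂ) • 1 := by
  ext ⟨i, j⟩ ⟨i', j'⟩
  simp [rM, Finset.sum_add_distrib, Matrix.one_apply]

lemma ssa [Nonempty a] [Nonempty c] (M : Matrix ((a × b) × c) ((a × b) × c) ℂ) (hM : M.PosSemidef) :
    vnEntropy M + vnEntropy (rL (rM M)) ≤ vnEntropy (rL M) + vnEntropy (rM M) := by
  have ha : (0 : ℝ) < Fintype.card a := by exact_mod_cast Fintype.card_pos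
  have hc : (0 : ℝ) < Fintype.card c := by exact_mod_cast Fintype.card_pos
  have hpos : ∀ e : ℝ, 0 < e → 
      vnEntropy (M + (e : ℂ) • 1) + vnEntropy (rL (rM M) + ((Fintype.card c * (Fintype.card a * e) : ℝ) : ℂ) • 1)
      ≤ vnEntropy (rL M + ((Fintype.card c * e : ℝ) : ℂ) • 1) + vnEntropy (rM M + ((Fintype.card a * e : ℝ) : ℂ) • 1) := by
    intro e he
    obtain ⟨U, p, h1, h2, h3⟩ := exists_diag_pos M hM e he
    obtain ⟨V, l, h4, h5, h6⟩ := exists_diag_pos (rL M) (rL_psd M hM) (Fintype.card c * e) (by positivity)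
    obtain ⟨U', p', h7, h8, h9⟩ := exists_diag_pos (rM M) (rM_psd M hM) (Fintype.card a * e) (by positivity)
    obtain ⟨V', l', h10, h11, h12⟩ := exists_diag_pos (rL (rM M)) (rL_psd _ (rM_psd M hM))
      (Fintype.card c * (Fintype.card a * e)) (by positivity)
    rw [← rL_shift] at h6
    rw [← rM_shift] at h9
    rw [← rL_shift, ← rM_shift] at h12
    have := ssa_core _ U p V l U' p' V' l' h1 h4 h7 h10 h2 h5 h8 h11 h3 h6 h9 h12
    rwa [rM_shift, rL_shift, rL_shift] at this
  have c1 := (ent_shift M hM)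
  have c2 := (ent_shift (rL M) (rL_psd M hM)).comp (continuous_const_mul (Fintype.card c : ℝ))
  have c3 := (ent_shift (rM M) (rM_psd M hM)).comp (continuous_const_mul (Fintype.card a : ℝ))
  have c4 := ((ent_shift (rL (rM M)) (rL_psd _ (rM_psd M hM))).comp (continuous_const_mul (Fintype.card c : ℝ))).comp
    (continuous_const_mul (Fintype.card a : ℝ))
  have L := ((c1.add c4).tendsto 0).mono_left (nhdsWithin_le_nhds (s := Set.Ioi 0))
  have R := ((c2.add c3).tendsto 0).mono_left (nhdsWithin_le_nhds (s := Set.Ioi 0))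
  have := le_of_tendsto_of_tendsto L R (by
    filter_upwards [self_mem_nhdsWithin] with e he
    exact hpos e he)
  simpa using this
end

/-- split a product -/
def splitE {ι : Type} {d : ι → Type} {p q r : ι → Prop} [DecidablePred q]
    (hq : ∀ i, q i → p i) (hr : ∀ i, r i → p i) (hpr : ∀ i, p i → ¬ q i → r i) (hd : ∀ i, r i → ¬ q i) :
    ((i : {j // p j}) → d i.1) ≃ ((i : {j // q j}) → d i.1) × ((i : {j // r j}) → d i.1) where
  toFun x := (fun i => x ⟨i.1, hq _ i.2⟩, fun i => x ⟨i.1, hr _ i.2⟩)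
  invFun y := fun i => if h : q i.1 then y.1 ⟨i.1, h⟩ else y.2 ⟨i.1, hpr _ i.2 h⟩
  left_inv x := by
    funext i
    by_cases h : q i.1 <;> simp [h]
  right_inv y := by
    ext i
    · simp [i.2]
    · simp [hd _ i.2]

section multi2
variable {ι : Type} [Fintype ι] [DecidableEq ι] {d : ι → Type}
  [∀ i, Fintype (d i)] [∀ i, DecidableEq (d i)]

lemma pTr_eq (ρ : Matrix (∀ i, d i) (∀ i, d i) ℂ) (s : Finset ι) {X Y : Type} [Fintype Y]
    (E : ((i : {j // j ∈ s}) → d i.1) ≃ X) (E' : ((i : {j // j ∉ s}) → d i.1) ≃ Y)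
    (g : X → Y → ∀ i, d i) (h : ∀ x z, combine s x z = g (E x) (E' z)) :
    pTr ρ s = Matrix.submatrix (fun x y => ∑ z, ρ (g x z) (g y z)) E E := by
  ext x y
  simp only [pTr, h, Matrix.submatrix_apply]
  exact Equiv.sum_comp E' (fun z => ρ (g (E x) z) (g (E y) z))

/-- glue four pieces -/
def glue (s t : Finset ι) (x : (((i : {j // j ∈ s \ t}) → d i.1) × ((i : {j // j ∈ s ∩ t}) → d i.1)) ×
    ((i : {j // j ∈ t \ s}) → d i.1)) (z : (i : {j // j ∉ s ∪ t}) → d i.1) (i : ι) : d i :=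
  if hs : i ∈ s then
    if ht : i ∈ t then x.1.2 ⟨i, Finset.mem_inter.2 ⟨hs, ht⟩⟩ else x.1.1 ⟨i, Finset.mem_sdiff.2 ⟨hs, ht⟩⟩
  else if ht : i ∈ t then x.2 ⟨i, Finset.mem_sdiff.2 ⟨ht, hs⟩⟩ else
    z ⟨i, fun h => (Finset.mem_union.1 h).elim hs ht⟩

/-- joint state -/
def Mst (ρ : Matrix (∀ i, d i) (∀ i, d i) ℂ) (s t : Finset ι) :
    Matrix ((((i : {j // j ∈ s \ t}) → d i.1) × ((i : {j // j ∈ s ∩ t}) → d i.1)) ×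
    ((i : {j // j ∈ t \ s}) → d i.1)) ((((i : {j // j ∈ s \ t}) → d i.1) × ((i : {j // j ∈ s ∩ t}) → d i.1)) ×
    ((i : {j // j ∈ t \ s}) → d i.1)) ℂ :=
  fun x y => ∑ z, ρ (glue s t x z) (glue s t y z)

lemma Mst_psd (ρ : Matrix (∀ i, d i) (∀ i, d i) ℂ) (hρ : ρ.PosSemidef) (s t : Finset ι) :
    (Mst ρ s t).PosSemidef := by
  have : Mst ρ s t = ∑ k, ρ.submatrix (fun x => glue s t x k) (fun x => glue s t x k) := by
    ext i j; simp [Mst, Matrix.sum_apply]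
  rw [this]
  exact Matrix.posSemidef_sum _ fun k _ => hρ.submatrix _

lemma Sv_union (ρ : Matrix (∀ i, d i) (∀ i, d i) ℂ) (hρ : ρ.PosSemidef) (s t : Finset ι) :
    Sv ρ (s ∪ t) = vnEntropy (Mst ρ s t) := by
  have := pTr_eq ρ (s ∪ t)
    ((splitE (p := fun j => j ∈ s ∪ t) (q := fun j => j ∈ s) (r := fun j => j ∈ t \ s)
      (by simp +contextual) (by simp +contextual) (by simp; tauto) (by simp; try tauto)).trans
      (Equiv.prodCongr (splitE (p := fun j => j ∈ s) (q := fun j => j ∈ s \ t) (r := fun j => j ∈ s ∩ t)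
        (by simp +contextual) (by simp +contextual) (by simp; tauto) (by simp; try tauto)) (Equiv.refl _)))
    (Equiv.refl _) (glue s t) (by
      intro x z
      funext i
      by_cases hs : i ∈ s <;> by_cases ht : i ∈ t <;> simp [combine, glue, splitE, hs, ht])
  rw [Sv, this]
  exact ent_submatrix _ (Mst_psd ρ hρ s t).1 _

lemma Sv_left (ρ : Matrix (∀ i, d i) (∀ i, d i) ℂ) (hρ : ρ.PosSemidef) (s t : Finset ι) :
    Sv ρ s = vnEntropy (rL (Mst ρ s t)) := by
  have := pTr_eq ρ s
    (splitE (p := fun j => j ∈ s) (q := fun j => j ∈ s \ t) (r := fun j => j ∈ s ∩ t)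
        (by simp +contextual) (by simp +contextual) (by simp; tauto) (by simp; try tauto))
    (splitE (p := fun j => j ∉ s) (q := fun j => j ∈ t \ s) (r := fun j => j ∉ s ∪ t)
        (by simp +contextual) (by simp +contextual) (by simp; tauto) (by simp; tauto))
    (fun x z => glue s t (x, z.1) z.2) (by
      intro x z
      funext i
      by_cases hs : i ∈ s <;> by_cases ht : i ∈ t <;> simp [combine, glue, splitE, hs, ht])
  rw [Sv, this]
  have e : rL (Mst ρ s t) = fun x y => ∑ z : ((i : {j // j ∈ t \ s}) → d i.1) × ((i : {j // j ∉ s ∪ t}) → d i.1),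
    ρ (glue s t (x, z.1) z.2) (glue s t (y, z.1) z.2) := by
    ext x y
    simp [rL, Mst, Fintype.sum_prod_type]
  rw [← e]
  exact ent_submatrix _ (rL_psd _ (Mst_psd ρ hρ s t)).1 _

lemma Sv_right (ρ : Matrix (∀ i, d i) (∀ i, d i) ℂ) (hρ : ρ.PosSemidef) (s t : Finset ι) :
    Sv ρ t = vnEntropy (rM (Mst ρ s t)) := by
  have := pTr_eq ρ t
    (splitE (p := fun j => j ∈ t) (q := fun j => j ∈ s ∩ t) (r := fun j => j ∈ t \ s)
        (by simp +contextual) (by simp +contextual) (by simp; tauto) (by simp; tauto))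
    (splitE (p := fun j => j ∉ t) (q := fun j => j ∈ s \ t) (r := fun j => j ∉ s ∪ t)
        (by simp +contextual) (by simp +contextual) (by simp; tauto) (by simp; tauto))
    (fun x z => glue s t ((z.1, x.1), x.2) z.2) (by
      intro x z
      funext i
      by_cases hs : i ∈ s <;> by_cases ht : i ∈ t <;> simp [combine, glue, splitE, hs, ht])
  rw [Sv, this]
  have e : rM (Mst ρ s t) = fun x y => ∑ z : ((i : {j // j ∈ s \ t}) → d i.1) × ((i : {j // j ∉ s ∪ t}) → d i.1),
    ρ (glue s t ((z.1, x.1), x.2) z.2) (glue s t ((z.1, y.1), y.2) z.2) := by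
    ext x y
    simp [rM, Mst, Fintype.sum_prod_type]
  rw [← e]
  exact ent_submatrix _ (rM_psd _ (Mst_psd ρ hρ s t)).1 _

lemma Sv_inter (ρ : Matrix (∀ i, d i) (∀ i, d i) ℂ) (hρ : ρ.PosSemidef) (s t : Finset ι) :
    Sv ρ (s ∩ t) = vnEntropy (rL (rM (Mst ρ s t))) := by
  have := pTr_eq ρ (s ∩ t)
    (Equiv.refl _)
    ((splitE (p := fun j => j ∉ s ∩ t) (q := fun j => j ∈ t \ s) (r := fun j => j ∉ t ∨ j ∈ s \ t)
      (by simp; tauto) (by simp; tauto) (by simp; tauto) (by simp; tauto)).trans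
      (Equiv.prodCongr (Equiv.refl _) (splitE (p := fun j => j ∉ t ∨ j ∈ s \ t) (q := fun j => j ∈ s \ t) (r := fun j => j ∉ s ∪ t)
        (by simp +contextual) (by simp +contextual) (by simp; tauto) (by simp; tauto))))
    (fun x z => glue s t ((z.2.1, x), z.1) z.2.2) (by
      intro x z
      funext i
      by_cases hs : i ∈ s <;> by_cases ht : i ∈ t <;> simp [combine, glue, splitE, hs, ht])
  rw [Sv, this]
  have e : rL (rM (Mst ρ s t)) = fun x y => ∑ z : ((i : {j // j ∈ t \ s}) → d i.1) × (((i : {j // j ∈ s \ t}) → d i.1) × ((i : {j // j ∉ s ∪ t}) → d i.1)),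
    ρ (glue s t ((z.2.1, x), z.1) z.2.2) (glue s t ((z.2.1, y), z.1) z.2.2) := by
    ext x y
    simp [rM, rL, Mst, Fintype.sum_prod_type]
  rw [← e]
  exact ent_submatrix _ (rL_psd _ (rM_psd _ (Mst_psd ρ hρ s t))).1 _

lemma Sv_submod (ρ : Matrix (∀ i, d i) (∀ i, d i) ℂ) (hρ : IsDensity ρ) (s t : Finset ι) :
    Sv ρ (s ∪ t) + Sv ρ (s ∩ t) ≤ Sv ρ s + Sv ρ t := by
  have hne : Nonempty (∀ i, d i) := by
    by_contra h
    rw [not_nonempty_iff] at h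
    have := hρ.2
    simp [Matrix.trace] at this
  obtain ⟨x0⟩ := hne
  have : Nonempty ((i : {j // j ∈ s \ t}) → d i.1) := ⟨fun i => x0 i.1⟩
  have : Nonempty ((i : {j // j ∈ t \ s}) → d i.1) := ⟨fun i => x0 i.1⟩
  rw [Sv_union ρ hρ.1 s t, Sv_inter ρ hρ.1 s t, Sv_left ρ hρ.1 s t, Sv_right ρ hρ.1 s t]
  exact ssa _ (Mst_psd ρ hρ.1 s t)

end multi2

section comb
variable {ι : Type} [DecidableEq ι] 

/-- abstract dual information -/
def G (f : Finset ι → ℝ) (P : Finset (Finset ι)) : ℝ :=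
  f (P.sup id) + ∑ X ∈ P, (f (P.sup id \ X) - f (P.sup id))

lemma del_mono (f : Finset ι → ℝ) (hf : ∀ s t, f (s ∪ t) + f (s ∩ t) ≤ f s + f t)
    (X Z W : Finset ι) (h1 : X ⊆ Z) (h2 : Z ⊆ W) : f (Z \ X) - f Z ≤ f (W \ X) - f W := by
  have := hf Z (W \ X)
  have e1 : Z ∪ (W \ X) = W := by
    ext i; have := @h1 i; have := @h2 i; simp; tauto
  have e2 : Z ∩ (W \ X) = Z \ X := by
    ext i; have := @h1 i; have := @h2 i; simp; tauto
  rw [e1, e2] at this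
  linarith

lemma merge_le (f : Finset ι → ℝ) (hf : ∀ s t, f (s ∪ t) + f (s ∩ t) ≤ f s + f t)
    (W : Finset ι) (T : Finset (Finset ι)) (hT : (T : Set (Finset ι)).PairwiseDisjoint id) :
    f (W \ T.sup id) - f W ≤ ∑ X ∈ T, (f (W \ X) - f W) := by
  induction T using Finset.induction_on with
  | empty => simp
  | insert X T hX ih =>
    rw [Finset.sum_insert hX, Finset.sup_insert]
    have ih' := ih (hT.subset (by simp))
    have hd : Disjoint X (T.sup id) := by
      rw [Finset.disjoint_sup_right]
      intro Y hY
      exact hT (by simp) (by simp [hY]) (by rintro rfl; exact hX hY)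
    have := hf (W \ X) (W \ T.sup id)
    have e1 : (W \ X) ∪ (W \ T.sup id) = W := by
      ext i
      have := fun (h1 : i ∈ X) => Finset.disjoint_left.1 hd h1
      simp only [Finset.mem_union, Finset.mem_sdiff]; tauto
    have e2 : (W \ X) ∩ (W \ T.sup id) = W \ (id X ⊔ T.sup id) := by
      ext i
      simp only [Finset.mem_inter, Finset.mem_sdiff, Finset.sup_eq_union, Finset.mem_union, id]; tauto
    rw [e1, e2] at this
    linarith

lemma G_insert (f : Finset ι → ℝ) (X : Finset ι) (R : Finset (Finset ι)) (hX : X ∉ R) (hd : Disjoint X (R.sup id)) :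
    G f (insert X R) = f (R.sup id) + ∑ Y ∈ R, (f ((X ∪ R.sup id) \ Y) - f (X ∪ R.sup id)) := by
  rw [G, Finset.sum_insert hX, Finset.sup_insert]
  have : (id X ⊔ R.sup id) \ X = R.sup id := by
    ext i
    have := fun (h1 : i ∈ X) => Finset.disjoint_left.1 hd h1
    simp only [Finset.mem_sdiff, Finset.sup_eq_union, Finset.mem_union, id]; tauto
  rw [this]
  simp only [Finset.sup_eq_union, id]
  ring

lemma G_discard1 (f : Finset ι → ℝ) (hf : ∀ s t, f (s ∪ t) + f (s ∩ t) ≤ f s + f t)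
    (X : Finset ι) (R : Finset (Finset ι)) (hX : X ∉ R) (hd : Disjoint X (R.sup id)) :
    G f R ≤ G f (insert X R) := by
  rw [G_insert f X R hX hd, G]
  refine add_le_add le_rfl (Finset.sum_le_sum fun Y hY => ?_)
  exact del_mono f hf _ _ _ (Finset.le_sup (f := id) hY) Finset.subset_union_right

lemma G_discard (f : Finset ι → ℝ) (hf : ∀ s t, f (s ∪ t) + f (s ∩ t) ≤ f s + f t)
    (Q D : Finset (Finset ι)) (hQD : Disjoint Q D) (hP : ((Q ∪ D : Finset (Finset ι)) : Set (Finset ι)).PairwiseDisjoint id) :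
    G f Q ≤ G f (Q ∪ D) := by
  induction D using Finset.induction_on with
  | empty => simp
  | insert X D hX ih =>
    rw [Finset.union_insert] at hP ⊢
    rw [Finset.disjoint_insert_right] at hQD
    have hXR : X ∉ Q ∪ D := by simp [hX, hQD.1]
    refine (ih hQD.2 (hP.subset (by simp))).trans (G_discard1 f hf _ _ hXR ?_)
    rw [Finset.disjoint_sup_right]
    intro Y hY
    exact hP (by simp) (by simp only [Finset.coe_insert]; exact Or.inr hY) (by rintro rfl; exact hXR hY)

lemma part_disj (P R : Finset (Finset ι)) (hP : IsPartition P) (X : Finset ι) (hX : X ∈ P) (hR : R ⊆ P) (hXR : X ∉ R) :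
    Disjoint X (R.sup id) := by
  rw [Finset.disjoint_sup_right]
  intro Y hY
  exact hP.2 hX (hR hY) (by rintro rfl; exact hXR hY)

lemma not_mem_of_disj (X : Finset ι) (R : Finset (Finset ι)) (hX : X.Nonempty) (h : Disjoint X (R.sup id)) : X ∉ R := by
  intro hXR
  have h2 : X ≤ R.sup id := Finset.le_sup (f := id) hXR
  have := h.mono_right h2
  rw [disjoint_self] at this
  exact hX.ne_empty this

lemma part_insert (X : Finset ι) (R : Finset (Finset ι)) (hR : IsPartition R) (hX : X.Nonempty) (h : Disjoint X (R.sup id)) :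
    IsPartition (insert X R) := by
  refine ⟨?_, ?_⟩
  · intro Y hY
    rcases Finset.mem_insert.1 hY with rfl | hY
    · exact hX
    · exact hR.1 Y hY
  · rw [Finset.coe_insert]
    refine hR.2.insert fun Y hY _ => ?_
    exact h.mono_right (Finset.le_sup (f := id) hY)

lemma part_sub (P R : Finset (Finset ι)) (hP : IsPartition P) (hR : R ⊆ P) : IsPartition R :=
  ⟨fun X hX => hP.1 X (hR hX), hP.2.subset (by exact_mod_cast hR)⟩

lemma G_step (f : Finset ι → ℝ) (hf : ∀ s t, f (s ∪ t) + f (s ∩ t) ≤ f s + f t)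
    (P Q : Finset (Finset ι)) (hP : IsPartition P) (h : CoarserStep P Q) :
    IsPartition Q ∧ G f Q ≤ G f P := by
  cases h with
  | discard hQP hQ =>
    refine ⟨part_sub P Q hP hQP, ?_⟩
    have e : Q ∪ (P \ Q) = P := Finset.union_sdiff_of_subset hQP
    have := G_discard f hf Q (P \ Q) Finset.disjoint_sdiff (by rw [e]; exact hP.2)
    rwa [e] at this
  | merge T hT hT' =>
    have hd : Disjoint (T.sup id) ((P \ T).sup id) := by
      rw [Finset.disjoint_sup_left]
      intro X hX
      exact part_disj P _ hP X (hT hX) Finset.sdiff_subset (by simp [hX])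
    have hne : (T.sup id).Nonempty := by
      obtain ⟨X, hX⟩ := hT'
      exact (hP.1 X (hT hX)).mono (Finset.le_sup (f := id) hX)
    have hnm := not_mem_of_disj _ _ hne hd
    refine ⟨part_insert _ _ (part_sub _ _ hP Finset.sdiff_subset) hne hd, ?_⟩
    have hsup : (insert (T.sup id) (P \ T)).sup id = P.sup id := by
      rw [Finset.sup_insert, id, ← Finset.sup_union, Finset.union_sdiff_of_subset hT]
    rw [G, G, hsup, Finset.sum_insert hnm, ← Finset.sum_sdiff hT]
    have := merge_le f hf (P.sup id) T (part_sub P T hP hT).2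
    linarith
  | shrink X X' hX h2 hsub hne =>
    have hd := part_disj P (P.erase X) hP X hX (Finset.erase_subset _ _) (by simp)
    have hd' : Disjoint X' ((P.erase X).sup id) := hd.mono_left hsub
    refine ⟨part_insert _ _ (part_sub _ _ hP (Finset.erase_subset _ _)) hne hd', ?_⟩
    have e := G_insert f X (P.erase X) (by simp) hd
    rw [Finset.insert_erase hX] at e
    rw [e, G_insert f X' _ (not_mem_of_disj _ _ hne hd') hd']
    refine add_le_add le_rfl (Finset.sum_le_sum fun Y hY => ?_)
    exact del_mono f hf _ _ _ ((Finset.le_sup (f := id) hY : Y ≤ _).trans Finset.subset_union_right)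
      (Finset.union_subset_union_left hsub)

end comb

/-- If the partition `Y₁|⋯|Y_l` of (a subsystem of) an `n`-partite system is
coarser than the partition `X₁|⋯|X_k`, then for every density operator `ρ`,
`I'(X₁:⋯:X_k) ≥ I'(Y₁:⋯:Y_l)`. -/
theorem dualMutualInfo_mono_of_coarser
    {ι : Type} [Fintype ι] [DecidableEq ι] {d : ι → Type}
    [∀ i, Fintype (d i)] [∀ i, DecidableEq (d i)]
    (ρ : Matrix (∀ i, d i) (∀ i, d i) ℂ) (hρ : IsDensity ρ)
    (P Q : Finset (Finset ι)) (hP : IsPartition P) (hPQ : Coarser P Q) :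
    MI' ρ Q ≤ MI' ρ P := by
  have hG : ∀ R, MI' ρ R = G (Sv ρ) R := by
    intro R
    rw [MI', G, Finset.sum_sub_distrib, Finset.sum_const, nsmul_eq_mul]
    ring
  rw [hG, hG]
  have main : IsPartition Q ∧ G (Sv ρ) Q ≤ G (Sv ρ) P := by
    induction hPQ with
    | refl => exact ⟨hP, le_rfl⟩
    | tail _ hs ih =>
      have := G_step (Sv ρ) (Sv_submod ρ hρ) _ _ ih.1 hs
      exact ⟨this.1, this.2.trans ih.2⟩
  exact main.2
end
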